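/- Let ℓ be a prime, r ≥ 1, and let F be a finite field with ℓ^r elements, with ℓ^r ≠ 2. For every n ≥ 1, the stabilization map GL_n(F) → GL_{n+1}(F), A ↦ diag(A,1), induces an isomorphism H_d(GL_n(F); F_ℓ) → H_d(GL_{n+1}(F); F_ℓ) for all d ≤ n + r(ℓ−1) − 3, and a surjection for d = n + r(ℓ−1) − 2, where F_ℓ is the ℓ-element field with trivial action. -/

import Mathlib

/-! # Group homology via the inhomogeneous bar complex (trivial coefficients) -/

namespace GroupHomologyBar

variable (G : Type) [Group G] (A : Type) [AddCommGroup A]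

/-- Inhomogeneous `n`-chains of `G` with coefficients in `A`. -/
abbrev chains (n : ℕ) : Type := (Fin n → G) →₀ A

/-- The differential of the inhomogeneous bar complex with trivial `G`-action on the
coefficients, sending `[g₁|…|g_{n+1}] ⊗ a` to
`[g₂|…|g_{n+1}] ⊗ a + ∑ⱼ (-1)^{j+1} [g₁|…|gⱼg_{j+1}|…|g_{n+1}] ⊗ a`
(the last summand of the sum being `(-1)^{n+1} [g₁|…|g_n] ⊗ a`). -/
noncomputable def d (n : ℕ) : chains G A (n + 1) →ₗ[ℤ] chains G A n :=
  Finsupp.lsum ℤ fun g =>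
    (Finsupp.lsingle (Fin.tail g) : A →ₗ[ℤ] chains G A n)
      + ∑ j : Fin (n + 1),
          ((-1 : ℤ) ^ ((j : ℕ) + 1)) • Finsupp.lsingle (Fin.contractNth j (· * ·) g)

/-- The `n`-cycles. -/
noncomputable def cycles : (n : ℕ) → Submodule ℤ (chains G A n)
  | 0 => ⊤
  | (n + 1) => LinearMap.ker (d G A n)

/-- The `n`-boundaries, viewed as a submodule of the `n`-cycles. -/
noncomputable def boundaries (n : ℕ) : Submodule ℤ (cycles G A n) :=
  Submodule.comap (cycles G A n).subtype (LinearMap.range (d G A n))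

/-- The group homology `H_n(G; A)` of `G` with trivial coefficients in `A`. -/
abbrev Homology (n : ℕ) : Type := cycles G A n ⧸ boundaries G A n

variable {G}
variable {G' : Type} [Group G']

/-- The map on chains induced by a group homomorphism. -/
noncomputable def chainsMap (φ : G →* G') (n : ℕ) : chains G A n →ₗ[ℤ] chains G' A n :=
  Finsupp.lmapDomain A ℤ fun v => φ ∘ v

lemma chainsMap_single (φ : G →* G') {n : ℕ} (v : Fin n → G) (a : A) :
    chainsMap A φ n (Finsupp.single v a) = Finsupp.single (φ ∘ v) a := by
  simp [chainsMap, Finsupp.mapDomain_single]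

lemma d_single {n : ℕ} (g : Fin (n + 1) → G) (a : A) :
    d G A n (Finsupp.single g a)
      = Finsupp.single (Fin.tail g) a
        + ∑ j : Fin (n + 1),
            ((-1 : ℤ) ^ ((j : ℕ) + 1)) • Finsupp.single (Fin.contractNth j (· * ·) g) a := by
  simp [d, Finsupp.lsum_single]

lemma d_chainsMap (φ : G →* G') (n : ℕ) :
    (d G' A n).comp (chainsMap A φ (n + 1)) = (chainsMap A φ n).comp (d G A n) := by
  apply Finsupp.lhom_ext
  intro g a
  have hc : ∀ j : Fin (n + 1),
      φ ∘ Fin.contractNth j (· * ·) g = Fin.contractNth j (· * ·) (φ ∘ g) := by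
    intro j
    funext k
    simp only [Function.comp_apply, Fin.contractNth]
    split_ifs <;> simp
  simp only [LinearMap.comp_apply, chainsMap_single, d_single, map_add, map_sum, map_smul,
    chainsMap_single, Fin.comp_tail, hc]

lemma chainsMap_mem_cycles (φ : G →* G') (n : ℕ) :
    ∀ x ∈ cycles G A n, chainsMap A φ n x ∈ cycles G' A n := by
  intro x hx
  cases n with
  | zero => trivial
  | succ n =>
    simp only [cycles, LinearMap.mem_ker] at hx ⊢
    have := congrArg (fun L : chains G A (n + 1) →ₗ[ℤ] chains G' A n => L x) (d_chainsMap A φ n)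
    simp only [LinearMap.comp_apply] at this
    rw [this, hx, map_zero]

/-- The map on cycles induced by a group homomorphism. -/
noncomputable def cyclesMap (φ : G →* G') (n : ℕ) : cycles G A n →ₗ[ℤ] cycles G' A n :=
  (chainsMap A φ n).restrict (chainsMap_mem_cycles A φ n)

/-- The map `H_n(G; A) → H_n(G'; A)` on group homology induced by a group
homomorphism `φ : G →* G'`. -/
noncomputable def inducedMap (φ : G →* G') (n : ℕ) :
    Homology G A n →ₗ[ℤ] Homology G' A n :=
  Submodule.mapQ _ _ (cyclesMap A φ n) (by
    rintro ⟨x, hx⟩ hmem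
    simp only [boundaries, Submodule.mem_comap, Submodule.subtype_apply,
      LinearMap.mem_range] at hmem ⊢
    obtain ⟨y, hy⟩ := hmem
    refine ⟨chainsMap A φ (n + 1) y, ?_⟩
    have := congrArg (fun L : chains G A (n + 1) →ₗ[ℤ] chains G' A n => L y) (d_chainsMap A φ n)
    simp only [LinearMap.comp_apply] at this
    rw [this, hy]
    rfl)

end GroupHomologyBar

/-- The block-sum monoid homomorphism `A ↦ diag(A, 1)` on square matrices. -/
noncomputable def diagBlockHom (F : Type) [Field F] (n : ℕ) :
    Matrix (Fin n) (Fin n) F →* Matrix (Fin (n + 1)) (Fin (n + 1)) F :=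
  ((Matrix.reindexAlgEquiv F F (finSumFinEquiv : Fin n ⊕ Fin 1 ≃ Fin (n + 1))).toRingEquiv.toMonoidHom).comp
    { toFun := fun A => Matrix.fromBlocks A 0 0 (1 : Matrix (Fin 1) (Fin 1) F)
      map_one' := Matrix.fromBlocks_one
      map_mul' := fun A B => by
        rw [Matrix.fromBlocks_multiply]
        simp }

/-- The stabilization homomorphism `GL_n(F) → GL_{n+1}(F)`, `A ↦ diag(A, 1)`. -/
noncomputable def glStab (F : Type) [Field F] (n : ℕ) :
    GL (Fin n) F →* GL (Fin (n + 1)) F :=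
  Units.map (diagBlockHom F n)

/-! For a finite-dimensional space `V` over `F` and a map `b : κ → τ`, consider the group of block
upper triangular matrices with a diagonal block in `GL(V)`, a column in `V` for every `c : κ` and
the diagonal entry `t (b c)`, with one free scalar for every element of `τ`. In degrees
`n < |τ| + dim V + r(ℓ - 1) - 2`, a reduced class on this group vanishes as soon as its restrictions
along the deletions of the blocks of columns do. This is proved by induction on `dim V`.

* The deletions are commuting projections of a group extension. The common kernel of the projections
  kills the low rows of the extension, so that a class on the total group which all of them
  annihilate is pushed along a zig-zag until it vanishes, one degree for each projection.
* In dimension at most one, the weighted diagonal embeddings given by a family `v` of `r(ℓ - 1)`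
  elements of `F` with no vanishing subsums provide the additional projections: on the blocks they
  act by the partial sums of `v`, which are units, and inclusion-exclusion over the subsets of the
  index set isolates the class.
* From `V` to `V × F` one restricts to the stabilizer of `V`, whose index is prime to `ℓ`, and
  filters by the entries of the additional row, which is again governed by commuting projections.

For one block with one column the group is a parabolic subgroup of `GL(V × F)`; a class which
comes from its diagonal blocks is zero by conjugation with a coordinate swap, so the reduced
cohomology of `GL_n(F)` vanishes in degrees below `n + r(ℓ - 1) - 2`. By duality over the
coefficient field, source and target of the stabilization map vanish in positive degrees. -/

namespace GLStability

/-! ### Reduced cohomology of groups -/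

section Cochains

variable (k : Type*) [CommRing k] {E E' A B : Type*} [AddCommGroup A] [Module k A]
  [AddCommGroup B] [Module k B]

/-- The homogeneous coboundary of cochains on a set `E`, the alternating sum over omitted
coordinates. A cochain in `n` variables has degree `n - 1`; functions of zero variables are
allowed, so the complex is augmented. -/
def coboundary (n : ℕ) : ((Fin n → E) → A) →ₗ[k] ((Fin (n + 1) → E) → A) :=
  ∑ i : Fin (n + 1), (-1 : k) ^ (i : ℕ) • LinearMap.funLeft k A fun x : Fin (n + 1) → E =>
    i.removeNth x

lemma coboundary_apply (n : ℕ) (f : (Fin n → E) → A) (x : Fin (n + 1) → E) :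
    coboundary k n f x = ∑ i : Fin (n + 1), (-1 : k) ^ (i : ℕ) • f (i.removeNth x) := by
  simp [coboundary, LinearMap.funLeft_apply]

lemma coboundary_zero_apply (f : (Fin 0 → E) → A) (x : Fin 1 → E) :
    coboundary k 0 f x = f (Fin.tail x) := by
  simp [coboundary_apply, Fin.removeNth_zero]

lemma coboundary_succ_apply (n : ℕ) (f : (Fin (n + 1) → E) → A) (x : Fin (n + 2) → E) :
    coboundary k (n + 1) f x
      = f (Fin.tail x) - coboundary k n (fun y => f (Fin.cons (x 0) y)) (Fin.tail x) := by
  have face (i : Fin (n + 1)) :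
      i.succ.removeNth x = Fin.cons (x 0) (i.removeNth (Fin.tail x)) := by
    funext j
    refine Fin.cases ?_ (fun j => ?_) j <;> simp [Fin.removeNth, Fin.tail]
  simp only [coboundary_apply, Fin.sum_univ_succ (n := n + 1), Fin.removeNth_zero, face,
    Fin.val_zero, Fin.val_succ, pow_zero, pow_succ, mul_neg, mul_one, one_smul, neg_smul,
    Finset.sum_neg_distrib, sub_eq_add_neg]

lemma coboundary_cons (n : ℕ) (f : (Fin (n + 1) → E) → A) (a : E) :
    (fun y => coboundary k (n + 1) f (Fin.cons a y))
      = f - coboundary k n (fun y => f (Fin.cons a y)) := by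
  funext y
  simp [coboundary_succ_apply]

lemma coboundary_comp (γ : E → E') (n : ℕ) (f : (Fin n → E') → A) (x : Fin (n + 1) → E) :
    coboundary k n f (γ ∘ x) = coboundary k n (fun y => f (γ ∘ y)) x := by
  simp only [coboundary_apply]
  rfl

lemma map_coboundary (L : A →ₗ[k] B) (n : ℕ) (f : (Fin n → E) → A) (x : Fin (n + 1) → E) :
    L (coboundary k n f x) = coboundary k n (fun y => L (f y)) x := by
  simp only [coboundary_apply, map_sum, map_smul]

lemma coboundary_eval {Y : Type*} (n : ℕ) (w : (Fin n → E) → Y → A) (x : Fin (n + 1) → E)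
    (y : Y) : coboundary k n w x y = coboundary k n (fun z => w z y) x :=
  map_coboundary k (LinearMap.proj (φ := fun _ : Y => A) y) n w x

lemma coboundary_coboundary (n : ℕ) (f : (Fin n → E) → A) :
    coboundary k (n + 1) (coboundary k n f) = 0 := by
  funext x
  induction n with
  | zero =>
    rw [coboundary_succ_apply]
    simp only [coboundary_zero_apply, Fin.tail_cons, Pi.zero_apply, sub_eq_zero]
  | succ n ih =>
    rw [coboundary_succ_apply, coboundary_cons, map_sub, Pi.sub_apply, ih]
    simp

/-- The prism operator: the standard cochain homotopy between pullback along `α` and along `β`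
(see `coboundary_prism`), defined by recursion on the number of variables. -/
def prism (α β : E → E') : (n : ℕ) → ((Fin (n + 1) → E') → A) →ₗ[k] ((Fin n → E) → A)
  | 0 => 0
  | n + 1 => LinearMap.pi fun x =>
      LinearMap.proj (Fin.cons (α (x 0)) (β ∘ x) : Fin (n + 2) → E') -
        LinearMap.proj (Fin.tail x) ∘ₗ prism α β n ∘ₗ
          LinearMap.funLeft k A fun y : Fin (n + 1) → E' => Fin.cons (α (x 0)) y

lemma prism_succ_apply (α β : E → E') (n : ℕ) (f : (Fin (n + 2) → E') → A)
    (x : Fin (n + 1) → E) :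
    prism k α β (n + 1) f x = f (Fin.cons (α (x 0)) (β ∘ x))
      - prism k α β n (fun y => f (Fin.cons (α (x 0)) y)) (Fin.tail x) := rfl

lemma comp_cons_eq {n : ℕ} (γ : E → E') (a : E) (y : Fin n → E) :
    γ ∘ (Fin.cons a y : Fin (n + 1) → E) = Fin.cons (γ a) (γ ∘ y) := by
  funext i
  refine Fin.cases ?_ (fun j => ?_) i <;> simp

lemma prism_comp {α β : E → E'} {a : E → E} {a' : E' → E'} (hα : ∀ x, α (a x) = a' (α x))
    (hβ : ∀ x, β (a x) = a' (β x)) (n : ℕ) (f : (Fin (n + 1) → E') → A) (x : Fin n → E) :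
    prism k α β n f (a ∘ x) = prism k α β n (fun y => f (a' ∘ y)) x := by
  induction n with
  | zero => rfl
  | succ n ih =>
    have hβ' : β ∘ a ∘ x = a' ∘ β ∘ x := funext fun i => hβ (x i)
    simp only [prism_succ_apply, ← Fin.comp_tail, ih, comp_cons_eq, Function.comp_apply, hα, hβ']

lemma coboundary_prism (α β : E → E') (n : ℕ) (f : (Fin (n + 1) → E') → A)
    (x : Fin (n + 1) → E) :
    coboundary k n (prism k α β n f) x + prism k α β (n + 1) (coboundary k (n + 1) f) x
      = f (β ∘ x) - f (α ∘ x) := by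
  have comp_eq {m : ℕ} (γ : E → E') (y : Fin (m + 1) → E) :
      γ ∘ y = Fin.cons (γ (y 0)) (γ ∘ Fin.tail y) := by
    rw [← comp_cons_eq, Fin.cons_self_tail]
  induction n with
  | zero =>
    rw [prism_succ_apply, coboundary_cons, coboundary_succ_apply, comp_eq α]
    simp only [prism, LinearMap.zero_apply, coboundary_zero_apply, Pi.zero_apply,
      Fin.tail_cons, Fin.cons_zero, zero_add, sub_zero]
    congr 3
    exact Subsingleton.elim _ _
  | succ n ih =>
    have step : (fun y => prism k α β (n + 1) f (Fin.cons (x 0) y))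
        = (fun y => f (Fin.cons (α (x 0)) (Fin.cons (β (x 0)) (β ∘ y))))
          - prism k α β n (fun y => f (Fin.cons (α (x 0)) y)) := by
      funext y
      simp [prism_succ_apply, comp_cons_eq]
    have ih' := ih (fun y => f (Fin.cons (α (x 0)) y)) (Fin.tail x)
    rw [← comp_eq α] at ih'
    rw [coboundary_succ_apply, step, map_sub, Pi.sub_apply, prism_succ_apply k α β (n + 1),
      coboundary_cons, map_sub, Pi.sub_apply, coboundary_succ_apply, Fin.tail_cons, Fin.cons_zero,
      comp_eq β x, coboundary_succ_apply,
      ← coboundary_comp k β n (fun y => f (Fin.cons (α (x 0)) (Fin.cons (β (x 0)) y)))]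
    simp only [Fin.tail_cons, Fin.cons_zero]
    rw [eq_sub_iff_add_eq] at ih' ⊢
    rw [← ih']
    abel

end Cochains

section Cohomology

variable (k : Type*) [CommRing k] (G : Type*) [Group G]

/-- The `k`-valued cochains on `G` invariant under left translation. -/
def invariantCochains (n : ℕ) : Submodule k ((Fin n → G) → k) where
  carrier := {f | ∀ (g : G) (x : Fin n → G), f (fun i => g * x i) = f x}
  add_mem' ha hb g x := congrArg₂ (· + ·) (ha g x) (hb g x)
  zero_mem' _ _ := rfl
  smul_mem' c _ hf g x := congrArg (c * ·) (hf g x)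

/-- The homogeneous cocycles of `G` of degree `n`, as functions of `n + 1` variables. -/
def cocycles (n : ℕ) : Submodule k ((Fin (n + 1) → G) → k) :=
  invariantCochains k G (n + 1) ⊓ LinearMap.ker (coboundary k (n + 1))

/-- The homogeneous coboundaries of `G` of degree `n`. -/
def coboundaries (n : ℕ) : Submodule k (cocycles k G n) :=
  ((invariantCochains k G n).map (coboundary k n)).submoduleOf (cocycles k G n)

/-- The cohomology of `G` with trivial coefficients in `k`, computed from the augmented
homogeneous complex: it vanishes in degree `0` and is `Hⁿ(G; k)` for `n > 0`. -/
def ReducedCohomology (n : ℕ) : Type _ := cocycles k G n ⧸ coboundaries k G n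

instance (n : ℕ) : AddCommGroup (ReducedCohomology k G n) :=
  inferInstanceAs (AddCommGroup (cocycles k G n ⧸ coboundaries k G n))

instance (n : ℕ) : Module k (ReducedCohomology k G n) :=
  inferInstanceAs (Module k (cocycles k G n ⧸ coboundaries k G n))

variable {k G} {n : ℕ}

/-- The cohomology class of a cocycle. -/
def cohomologyClass : cocycles k G n →ₗ[k] ReducedCohomology k G n := (coboundaries k G n).mkQ

lemma cohomologyClass_surjective :
    Function.Surjective (cohomologyClass : cocycles k G n → ReducedCohomology k G n) :=
  Submodule.mkQ_surjective _

lemma cohomologyClass_eq_zero_iff {f : cocycles k G n} :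
    cohomologyClass f = 0 ↔ ∃ u ∈ invariantCochains k G n, coboundary k n u = f :=
  (Submodule.Quotient.mk_eq_zero _).trans Iff.rfl

lemma cohomologyClass_eq_iff {f g : cocycles k G n} :
    cohomologyClass f = cohomologyClass g ↔
      ∃ u ∈ invariantCochains k G n, coboundary k n u = (f : (Fin (n + 1) → G) → k) - g := by
  rw [← sub_eq_zero, ← map_sub, cohomologyClass_eq_zero_iff]
  rfl

lemma coboundary_prism_of_cocycle {E E' : Type*} {f : (Fin (n + 1) → E') → k}
    (hf : coboundary k (n + 1) f = 0) (α β : E → E') (x : Fin (n + 1) → E) :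
    coboundary k n (prism k α β n f) x = f (β ∘ x) - f (α ∘ x) := by
  rw [← coboundary_prism k, hf, map_zero, Pi.zero_apply, add_zero]

lemma subsingleton_of_subsingleton [Subsingleton G] : Subsingleton (ReducedCohomology k G n) := by
  refine subsingleton_of_forall_eq 0 fun c => ?_
  obtain ⟨f, rfl⟩ := cohomologyClass_surjective c
  refine cohomologyClass_eq_zero_iff.2 ⟨fun y => f.1 (Fin.cons 1 y), fun g x => ?_, ?_⟩
  · simp only [Subsingleton.elim g 1, one_mul]
  · have cone := coboundary_cons k n f.1 1
    rw [LinearMap.mem_ker.1 f.2.2] at cone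
    exact (sub_eq_zero.1 cone.symm).symm

lemma subsingleton_degree_zero : Subsingleton (ReducedCohomology k G 0) := by
  refine subsingleton_of_forall_eq 0 fun c => ?_
  obtain ⟨f, rfl⟩ := cohomologyClass_surjective c
  refine cohomologyClass_eq_zero_iff.2 ⟨fun _ => f.1 1, fun _ _ => rfl, ?_⟩
  funext x
  rw [coboundary_zero_apply, ← f.2.1 (x 0)]
  refine congrArg f.1 (funext fun i => ?_)
  rw [Fin.fin_one_eq_zero i, Pi.one_apply, mul_one]

variable {G' G'' : Type*} [Group G'] [Group G'']

lemma comp_mem_invariantCochains (φ : G' →* G) {f : (Fin n → G) → k}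
    (hf : f ∈ invariantCochains k G n) :
    (fun x => f (φ ∘ x)) ∈ invariantCochains k G' n := fun g x => by
  simpa only [Function.comp_def, map_mul] using hf (φ g) (φ ∘ x)

lemma comp_mem_cocycles (φ : G' →* G) {f : (Fin (n + 1) → G) → k} (hf : f ∈ cocycles k G n) :
    (fun x => f (φ ∘ x)) ∈ cocycles k G' n := by
  refine ⟨comp_mem_invariantCochains φ hf.1, LinearMap.mem_ker.2 <| funext fun x => ?_⟩
  rw [← coboundary_comp, LinearMap.mem_ker.1 hf.2, Pi.zero_apply, Pi.zero_apply]

/-- The map on reduced cohomology induced by a group homomorphism. -/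
def res (φ : G' →* G) : ReducedCohomology k G n →ₗ[k] ReducedCohomology k G' n :=
  Submodule.mapQ _ _
    ((LinearMap.funLeft k k fun x : Fin (n + 1) → G' => φ ∘ x).restrict
      fun _ hf => comp_mem_cocycles φ hf) (by
    rintro f ⟨u, hu, huf⟩
    refine ⟨_, comp_mem_invariantCochains φ hu, funext fun x => ?_⟩
    rw [← coboundary_comp, huf]
    rfl)

lemma res_cohomologyClass (φ : G' →* G) (f : cocycles k G n) :
    res φ (cohomologyClass f) = cohomologyClass ⟨_, comp_mem_cocycles φ f.2⟩ := rfl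

lemma res_id (x : ReducedCohomology k G n) : res (MonoidHom.id G) x = x := by
  obtain ⟨f, rfl⟩ := cohomologyClass_surjective x
  rfl

lemma res_res (φ : G' →* G) (ψ : G'' →* G') (x : ReducedCohomology k G n) :
    res ψ (res φ x) = res (φ.comp ψ) x := by
  obtain ⟨f, rfl⟩ := cohomologyClass_surjective x
  rfl

lemma res_comp_eq_zero {φ : G' →* G} {x : ReducedCohomology k G n} (hx : res φ x = 0)
    (ψ : G'' →* G') : res (φ.comp ψ) x = 0 := by
  rw [← res_res, hx, map_zero]

lemma res_injective_of_comp_eq_id {φ : G' →* G} {ψ : G →* G'} (h : φ.comp ψ = MonoidHom.id G) :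
    Function.Injective (res φ : ReducedCohomology k G n → ReducedCohomology k G' n) :=
  Function.LeftInverse.injective (g := res ψ) fun x => by rw [res_res, h, res_id]

lemma res_eq_of_conj {φ φ' : G' →* G} (g : G) (h : ∀ x, g * φ x = φ' x * g)
    (x : ReducedCohomology k G n) : res φ x = res φ' x := by
  obtain ⟨f, rfl⟩ := cohomologyClass_surjective x
  rw [res_cohomologyClass, res_cohomologyClass, cohomologyClass_eq_iff]
  refine ⟨prism k φ' (fun y => φ' y * g) n f, fun a y => ?_, funext fun y => ?_⟩
  · refine (prism_comp k (a := (a * ·)) (a' := (φ' a * ·)) (by simp) (by simp [mul_assoc])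
      n f.1 y).trans ?_
    exact congrArg (fun f => prism k _ _ n f y) (funext fun z => f.2.1 (φ' a) z)
  · rw [coboundary_prism_of_cocycle (LinearMap.mem_ker.1 f.2.2)]
    simp only [Function.comp_def, ← h, Pi.sub_apply]
    rw [f.2.1 g]

/-- Translate every element of `G` to a fixed representative of its orbit under `ι : G' → G`. -/
lemma exists_equivariant_retraction {ι : G' →* G} (hι : Function.Injective ι) :
    ∃ ρ : G → G', ∀ m g, ρ (ι m * g) = m * ρ g := by
  let _ := MulAction.compHom G ι
  let rep (g : G) : G := (Quotient.mk (MulAction.orbitRel G' G) g).out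
  have exists_mul_rep (g : G) : ∃ m, ι m * rep g = g :=
    (MulAction.orbitRel G' G).symm (Quotient.mk_out (s := MulAction.orbitRel G' G) g)
  choose ρ hρ using exists_mul_rep
  refine ⟨ρ, fun m g => hι <| mul_right_cancel (b := rep g) ?_⟩
  have rep_eq : rep (ι m * g) = rep g :=
    congrArg Quotient.out (Quotient.sound (s := MulAction.orbitRel G' G) ⟨m, rfl⟩)
  rw [map_mul, mul_assoc, hρ g, ← rep_eq, hρ]

/-- Cochains on `G` invariant under a subgroup compute the cohomology of the subgroup. -/
lemma exists_primitive_of_restriction {ι : G' →* G} (hι : Function.Injective ι)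
    {f : (Fin (n + 1) → G) → k} (f_inv : ∀ g x, f (fun i => ι g * x i) = f x)
    (hf : coboundary k (n + 1) f = 0) {v : (Fin n → G') → k} (hv : v ∈ invariantCochains k G' n)
    (hvf : ∀ x, coboundary k n v x = f (ι ∘ x)) :
    ∃ u : (Fin n → G) → k, (∀ g x, u (fun i => ι g * x i) = u x) ∧ coboundary k n u = f := by
  obtain ⟨ρ, hρ⟩ := exists_equivariant_retraction hι
  refine ⟨prism k (ι ∘ ρ) id n f + fun y => v (ρ ∘ y), fun g x => ?_, funext fun y => ?_⟩
  · simp only [Pi.add_apply]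
    congr 1
    · refine (prism_comp k (a := (ι g * ·)) (a' := (ι g * ·)) (by simp [hρ]) (by simp)
        n f x).trans ?_
      exact congrArg (fun f => prism k _ _ n f x) (funext fun z => f_inv g z)
    · simpa only [Function.comp_def, hρ] using hv g (ρ ∘ x)
  · rw [map_add, Pi.add_apply, coboundary_prism_of_cocycle hf, ← coboundary_comp, hvf]
    exact sub_add_cancel _ _

lemma res_injective_of_isUnit_index {ι : G' →* G} (hι : Function.Injective ι)
    [ι.range.FiniteIndex] (hidx : IsUnit (ι.range.index : k)) :
    Function.Injective (res ι : ReducedCohomology k G n → ReducedCohomology k G' n) := by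
  refine (injective_iff_map_eq_zero _).2 fun x hx => ?_
  obtain ⟨f, rfl⟩ := cohomologyClass_surjective x
  obtain ⟨v, hv, hvf⟩ := cohomologyClass_eq_zero_iff.1 hx
  obtain ⟨u, u_inv, hu⟩ := exists_primitive_of_restriction hι (fun g x => f.2.1 _ _)
    (LinearMap.mem_ker.1 f.2.2) hv (congrFun hvf)
  let _ : Fintype (G ⧸ ι.range) := Fintype.ofFinite _
  have translate_eq (a b : G) (hab : (a : G ⧸ ι.range) = b) (x : Fin n → G) :
      u (fun i => a⁻¹ * x i) = u (fun i => b⁻¹ * x i) := by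
    obtain ⟨m, hm⟩ := QuotientGroup.eq.1 hab
    simp [← u_inv m (fun i => b⁻¹ * x i), hm, mul_assoc]
  let average : (Fin n → G) → k := ∑ q : G ⧸ ι.range, fun x => u (fun i => q.out⁻¹ * x i)
  have coboundary_translate (a : G) : coboundary k n (fun x => u (fun i => a * x i)) = f := by
    funext x
    exact (coboundary_comp k (a * ·) n u x).symm.trans (by rw [hu]; exact f.2.1 a x)
  have coboundary_average : coboundary k n average = (ι.range.index : k) • f.1 := by
    simp only [average, map_sum, coboundary_translate, Finset.sum_const, Finset.card_univ,
      Subgroup.index, Nat.card_eq_fintype_card, Nat.cast_smul_eq_nsmul]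
  have average_mem : average ∈ invariantCochains k G n := fun g x => by
    simp only [average, Finset.sum_apply]
    refine Fintype.sum_equiv (MulAction.toPerm g⁻¹) _ _ fun q => ?_
    rw [MulAction.toPerm_apply, translate_eq (g⁻¹ • q).out (g⁻¹ * q.out)]
    · simp [mul_assoc]
    · rw [QuotientGroup.out_eq']
      exact congrArg (g⁻¹ • ·) (QuotientGroup.out_eq' q).symm
  refine cohomologyClass_eq_zero_iff.2
    ⟨(↑hidx.unit⁻¹ : k) • average, Submodule.smul_mem _ _ average_mem, ?_⟩
  rw [map_smul, coboundary_average, smul_smul, hidx.val_inv_mul, one_smul]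

end Cohomology

/-! ### Detection by commuting projections of an extension -/

section KillingOperators

variable {k : Type*} [CommRing k] {M M' : Type*} [AddCommGroup M] [Module k M]
  [AddCommGroup M'] [Module k M'] {I : Type*}

/-- The product of the operators `1 - T i` over a list of indices. For commuting idempotents it
projects onto the common kernel of the `T i`. -/
def killing (T : I → Module.End k M) (l : List I) : Module.End k M :=
  (l.map fun i => 1 - T i).prod

lemma killing_cons_apply (T : I → Module.End k M) (i : I) (l : List I) (x : M) :
    killing T (i :: l) x = killing T l x - T i (killing T l x) := by
  simp [killing]

lemma killing_append_apply (T : I → Module.End k M) (l l' : List I) (x : M) :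
    killing T (l ++ l') x = killing T l (killing T l' x) := by
  simp [killing]

lemma map_killing {T : I → Module.End k M} {T' : I → Module.End k M'} {L : M →ₗ[k] M'}
    (h : ∀ i x, L (T i x) = T' i (L x)) (l : List I) (x : M) :
    L (killing T l x) = killing T' l (L x) := by
  induction l with
  | nil => rfl
  | cons i l ih => rw [killing_cons_apply, map_sub, h, ih, killing_cons_apply]

lemma killing_mem {T : I → Module.End k M} {p : Submodule k M} (h : ∀ i, ∀ x ∈ p, T i x ∈ p)
    (l : List I) {x : M} (hx : x ∈ p) : killing T l x ∈ p := by
  induction l with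
  | nil => exact hx
  | cons i l ih =>
    rw [killing_cons_apply]
    exact sub_mem ih (h i _ ih)

lemma killing_eq_self {T : I → Module.End k M} {x : M} (hx : ∀ i, T i x = 0) (l : List I) :
    killing T l x = x := by
  induction l with
  | nil => rfl
  | cons i l ih => rw [killing_cons_apply, ih, hx, sub_zero]

lemma apply_killing_eq_zero {T : I → Module.End k M} (idem : ∀ i x, T i (T i x) = T i x)
    (comm : ∀ i j x, T i (T j x) = T j (T i x)) {l : List I} {j : I} (hj : j ∈ l) (x : M) :
    T j (killing T l x) = 0 := by
  induction l with
  | nil => simp at hj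
  | cons i l ih =>
    rw [killing_cons_apply, map_sub]
    rcases List.mem_cons.1 hj with rfl | hj
    · rw [idem, sub_self]
    · rw [comm, ih hj, map_zero, sub_zero]

end KillingOperators

section Extensions

/-- A family of homomorphisms into `G` detects degree `n` if a reduced cohomology class of `G`
of degree `n` vanishes as soon as all its restrictions vanish. -/
def Detects (k : Type*) [CommRing k] {I G : Type*} [Group G] {G' : I → Type*}
    [∀ i, Group (G' i)] (φ : ∀ i, G' i →* G) (n : ℕ) : Prop :=
  ∀ x : ReducedCohomology k G n, (∀ i, res (φ i) x = 0) → x = 0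

variable {N G Q : Type*} [Group N] [Group G] [Group Q]

/-- A family of endomorphisms of a group extension which induce the identity on the quotient and
commuting idempotents on the kernel. -/
structure CommutingProjections (S : GroupExtension N G Q) (I : Type*) where
  total : I → G →* G
  kernel : I → N →* N
  inl_kernel : ∀ i n, S.inl (kernel i n) = total i (S.inl n)
  rightHom_total : ∀ i g, S.rightHom (total i g) = S.rightHom g
  kernel_idem : ∀ i, (kernel i).comp (kernel i) = kernel i
  kernel_comm : ∀ i j, (kernel i).comp (kernel j) = (kernel j).comp (kernel i)

variable (k : Type*) [CommRing k] (S : GroupExtension N G Q)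

/-- Double cochains of an extension: functions of `a` variables in the quotient and `b` variables
in `G` that are invariant under the diagonal action of `G`. The row and column differentials are
the homogeneous coboundaries in the two groups of variables. -/
def doubleCochains (a b : ℕ) : Submodule k ((Fin a → Q) → (Fin b → G) → k) where
  carrier := {w | ∀ g x y, w (fun i => S.rightHom g * x i) (fun i => g * y i) = w x y}
  add_mem' hv hw g x y := congrArg₂ (· + ·) (hv g x y) (hw g x y)
  zero_mem' _ _ _ := rfl
  smul_mem' c _ hw g x y := congrArg (c * ·) (hw g x y)

/-- The cocycles on `G` that are only required to be invariant under the kernel of the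
extension. -/
def kernelInvariantCocycles (b : ℕ) : Submodule k ((Fin (b + 1) → G) → k) where
  carrier := {f | (∀ n y, f (fun i => S.inl n * y i) = f y) ∧ coboundary k (b + 1) f = 0}
  add_mem' hf hg := ⟨fun n y => congrArg₂ (· + ·) (hf.1 n y) (hg.1 n y),
    by rw [map_add, hf.2, hg.2, add_zero]⟩
  zero_mem' := ⟨fun _ _ => rfl, map_zero _⟩
  smul_mem' c _ hf := ⟨fun n y => congrArg (c * ·) (hf.1 n y),
    by rw [map_smul, hf.2, smul_zero]⟩

variable {k S} {a b n : ℕ}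

lemma rowCoboundary_mem {w : (Fin a → Q) → (Fin b → G) → k} (hw : w ∈ doubleCochains k S a b) :
    coboundary k a w ∈ doubleCochains k S (a + 1) b := fun g x y => by
  rw [coboundary_eval, coboundary_eval]
  exact (coboundary_comp k (S.rightHom g * ·) a (fun z => w z fun i => g * y i) x).trans
    (congrArg (coboundary k a · x) (funext fun z => hw g z y))

lemma columnCoboundary_mem {w : (Fin a → Q) → (Fin b → G) → k}
    (hw : w ∈ doubleCochains k S a b) :
    (fun x => coboundary k b (w x)) ∈ doubleCochains k S a (b + 1) := fun g x y =>
  (coboundary_comp k (g * ·) b (w fun i => S.rightHom g * x i) y).trans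
    (congrArg (coboundary k b · y) (funext fun z => hw g x z))

lemma exists_row_primitive {w : (Fin (a + 1) → Q) → (Fin (b + 1) → G) → k}
    (hw : w ∈ doubleCochains k S (a + 1) (b + 1)) (row_closed : coboundary k (a + 1) w = 0) :
    ∃ v ∈ doubleCochains k S a (b + 1), coboundary k a v = w := by
  refine ⟨fun x y => w (Fin.cons (S.rightHom (y 0)) x) y, fun g x y => ?_, ?_⟩
  · refine Eq.trans ?_ (hw g (Fin.cons (S.rightHom (y 0)) x) y)
    simp only [map_mul]
    exact congrArg (w · _) (comp_cons_eq (S.rightHom g * ·) _ x).symm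
  · funext x y
    have cone := congrFun (congrFun (coboundary_cons k a w (S.rightHom (y 0))) x) y
    simp only [row_closed, Pi.zero_apply, Pi.sub_apply] at cone
    rw [sub_eq_zero.1 cone.symm, coboundary_eval, coboundary_eval]

lemma apply_mem_kernelInvariantCocycles {w : (Fin a → Q) → (Fin (b + 1) → G) → k}
    (hw : w ∈ doubleCochains k S a (b + 1)) {x : Fin a → Q}
    (column_closed : coboundary k (b + 1) (w x) = 0) : w x ∈ kernelInvariantCocycles k S b :=
  ⟨fun n y => by simpa using hw (S.inl n) x y, column_closed⟩

lemma comp_inl_mem_cocycles {f : (Fin (b + 1) → G) → k} (hf : f ∈ kernelInvariantCocycles k S b) :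
    (fun y => f (S.inl ∘ y)) ∈ cocycles k N b := by
  refine ⟨fun n y => ?_, LinearMap.mem_ker.2 <| funext fun y => ?_⟩
  · simpa only [Function.comp_def, map_mul] using hf.1 n (S.inl ∘ y)
  · rw [← coboundary_comp, hf.2, Pi.zero_apply, Pi.zero_apply]

variable (k S b) in
/-- The class on the kernel of the restriction of a kernel-invariant cocycle. -/
def kernelClass : kernelInvariantCocycles k S b →ₗ[k] ReducedCohomology k N b :=
  cohomologyClass ∘ₗ (LinearMap.funLeft k k fun y : Fin (b + 1) → N => S.inl ∘ y).restrict
    fun _ hf => comp_inl_mem_cocycles hf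

lemma exists_column_primitive {w : (Fin (a + 1) → Q) → (Fin (b + 1) → G) → k}
    (hw : w ∈ doubleCochains k S (a + 1) (b + 1))
    (column_closed : ∀ x, coboundary k (b + 1) (w x) = 0)
    (hclass : ∀ x,
      kernelClass k S b ⟨w x, apply_mem_kernelInvariantCocycles hw (column_closed x)⟩ = 0) :
    ∃ u ∈ doubleCochains k S (a + 1) b, ∀ x, coboundary k b (u x) = w x := by
  have fibrewise (x : Fin (a + 1) → Q) :
      ∃ u : (Fin b → G) → k, (∀ n y, u (fun i => S.inl n * y i) = u y) ∧
        coboundary k b u = w x := by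
    obtain ⟨v, hv, hvw⟩ := cohomologyClass_eq_zero_iff.1 (hclass x)
    have invariant := (apply_mem_kernelInvariantCocycles hw (column_closed x)).1
    exact exists_primitive_of_restriction S.inl_injective invariant (column_closed x) hv
      (congrFun hvw)
  choose u u_inv hu using fibrewise
  choose s hs using S.rightHom_surjective
  refine ⟨fun x y => u (fun i => S.rightHom (s (x 0))⁻¹ * x i) (fun i => (s (x 0))⁻¹ * y i),
    fun g x y => ?_, fun x => funext fun y => ?_⟩
  · obtain ⟨n, hn⟩ : (s (S.rightHom g * x 0))⁻¹ * g * s (x 0) ∈ S.inl.range := by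
      rw [S.range_inl_eq_ker_rightHom, MonoidHom.mem_ker]
      simp [hs]
    refine Eq.trans ?_ (u_inv _ n (fun i => (s (x 0))⁻¹ * y i))
    simp [hn, hs, mul_assoc]
  · rw [← hw (s (x 0))⁻¹ x y, ← hu]
    exact (coboundary_comp k ((s (x 0))⁻¹ * ·) b _ y).symm

variable (k) in
/-- Restriction of cochains along an endomorphism. -/
def pullback (φ : G →* G) (b : ℕ) : Module.End k ((Fin b → G) → k) :=
  LinearMap.funLeft k k fun y => φ ∘ y

lemma pullback_apply (φ : G →* G) (f : (Fin b → G) → k) (y : Fin b → G) :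
    pullback k φ b f y = f (φ ∘ y) := rfl

lemma coboundary_pullback (φ : G →* G) (f : (Fin b → G) → k) :
    coboundary k b (pullback k φ b f) = pullback k φ (b + 1) (coboundary k b f) :=
  funext fun y => (coboundary_comp k φ b f y).symm

lemma exists_cohomologyClass_killing_eq {I : Type*} {φ : I → G →* G} {f : cocycles k G n}
    (hf : ∀ i, res (φ i) (cohomologyClass f) = 0) (l : List I) :
    ∃ h, cohomologyClass ⟨killing (fun i => pullback k (φ i) (n + 1)) l f.1, h⟩
      = cohomologyClass f := by
  let T (i : I) : Module.End k (cocycles k G n) :=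
    (pullback k (φ i) (n + 1)).restrict fun _ hg => comp_mem_cocycles (φ i) hg
  have val_killing := map_killing (T := T) (L := (cocycles k G n).subtype)
    (T' := fun i => pullback k (φ i) (n + 1)) (fun _ _ => rfl) l f
  refine ⟨killing_mem (fun i _ hg => comp_mem_cocycles (φ i) hg) l f.2, ?_⟩
  rw [← killing_eq_self (T := fun i => res (φ i)) hf l, ← map_killing (T := T) (fun _ _ => rfl)]
  exact congrArg _ (Subtype.ext val_killing.symm)

namespace CommutingProjections

variable {I : Type*} (P : CommutingProjections S I)

variable (k) in
/-- The killing operator on cochains attached to a list of projections. -/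
def kill (l : List I) (b : ℕ) : Module.End k ((Fin b → G) → k) :=
  killing (fun i => pullback k (P.total i) b) l

lemma coboundary_kill (l : List I) (f : (Fin b → G) → k) :
    coboundary k b (P.kill k l b f) = P.kill k l (b + 1) (coboundary k b f) :=
  map_killing (fun i => coboundary_pullback (P.total i)) l f

lemma kill_mem_doubleCochains (l : List I) {w : (Fin a → Q) → (Fin b → G) → k}
    (hw : w ∈ doubleCochains k S a b) :
    (fun x => P.kill k l b (w x)) ∈ doubleCochains k S a b := by
  induction l with
  | nil => exact hw
  | cons i l ih =>
    have pullback_mem : (fun x => pullback k (P.total i) b (P.kill k l b (w x)))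
        ∈ doubleCochains k S a b := fun g x y => by
      refine Eq.trans ?_ (ih (P.total i g) x (P.total i ∘ y))
      simp [P.rightHom_total, pullback_apply, Function.comp_def]
    exact sub_mem ih pullback_mem

lemma pullback_mem_kernelInvariantCocycles (i : I) {f : (Fin (b + 1) → G) → k}
    (hf : f ∈ kernelInvariantCocycles k S b) :
    pullback k (P.total i) (b + 1) f ∈ kernelInvariantCocycles k S b := by
  refine ⟨fun n y => ?_, by rw [coboundary_pullback, hf.2, map_zero]⟩
  simpa only [pullback_apply, Function.comp_def, map_mul, P.inl_kernel]
    using hf.1 (P.kernel i n) (P.total i ∘ y)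

lemma kill_mem_kernelInvariantCocycles (l : List I) {f : (Fin (b + 1) → G) → k}
    (hf : f ∈ kernelInvariantCocycles k S b) :
    P.kill k l (b + 1) f ∈ kernelInvariantCocycles k S b :=
  killing_mem (fun i _ => P.pullback_mem_kernelInvariantCocycles i) l hf

lemma kernelClass_kill (l : List I) (f : kernelInvariantCocycles k S b) :
    kernelClass k S b ⟨P.kill k l (b + 1) f, P.kill_mem_kernelInvariantCocycles l f.2⟩
      = killing (fun i => res (P.kernel i)) l (kernelClass k S b f) := by
  let T (i : I) : Module.End k (kernelInvariantCocycles k S b) :=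
    (pullback k (P.total i) (b + 1)).restrict
      fun _ => P.pullback_mem_kernelInvariantCocycles i
  have val_killing := map_killing (T := T) (L := (kernelInvariantCocycles k S b).subtype)
    (T' := fun i => pullback k (P.total i) (b + 1)) (fun _ _ => rfl) l f
  rw [← map_killing (T := T) (L := kernelClass k S b)]
  · exact congrArg _ (Subtype.ext val_killing.symm)
  · refine fun i f => congrArg cohomologyClass (Subtype.ext (funext fun y => ?_))
    exact congrArg f.1 (funext fun j => (P.inl_kernel i (y j)).symm)

lemma res_kernel_killing_eq_zero {l : List I} {j : I} (hj : j ∈ l)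
    (x : ReducedCohomology k N n) :
    res (P.kernel j) (killing (fun i => res (P.kernel i)) l x) = 0 :=
  apply_killing_eq_zero (T := fun i => res (P.kernel i))
    (fun i x => by rw [res_res, P.kernel_idem])
    (fun i j x => by rw [res_res, res_res, P.kernel_comm]) hj x

/-- After a killing operator is applied, the double cochain `w` becomes the total coboundary of a
double cochain one step lower in both directions. -/
def HasPrimitive (w : (Fin (a + 1) → Q) → (Fin (b + 1) → G) → k) : Prop :=
  ∃ l, ∃ v ∈ doubleCochains k S a b,
    ∀ x, coboundary k b (coboundary k a v x) = P.kill k l (b + 1) (w x)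

lemma HasPrimitive.of_column_primitive {w : (Fin (a + 1) → Q) → (Fin (b + 2) → G) → k}
    {u : (Fin (a + 1) → Q) → (Fin (b + 1) → G) → k} (hu : u ∈ doubleCochains k S (a + 1) (b + 1))
    {l : List I} (huw : ∀ x, coboundary k (b + 1) (u x) = P.kill k l (b + 2) (w x))
    (primitive : P.HasPrimitive (coboundary k (a + 1) u)) : P.HasPrimitive w := by
  obtain ⟨l', v, hv, hvu⟩ := primitive
  have row_closed : coboundary k (a + 1)
      ((fun x => P.kill k l' (b + 1) (u x)) - fun x => coboundary k b (v x)) = 0 := by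
    funext x
    rw [map_sub, Pi.sub_apply, ← map_coboundary, ← map_coboundary, hvu, sub_self, Pi.zero_apply]
  obtain ⟨v', hv', hv'u⟩ := exists_row_primitive
    (sub_mem (P.kill_mem_doubleCochains l' hu) (columnCoboundary_mem hv)) row_closed
  refine ⟨l' ++ l, v', hv', fun x => ?_⟩
  rw [hv'u, Pi.sub_apply, map_sub, coboundary_coboundary, sub_zero, coboundary_kill, huw]
  exact (killing_append_apply ..).symm

lemma coboundary_rowCoboundary_eq_zero {w : (Fin (a + 1) → Q) → (Fin (b + 1) → G) → k}
    (row_closed : coboundary k (a + 1) w = 0) {u : (Fin (a + 1) → Q) → (Fin b → G) → k}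
    {l : List I} (huw : ∀ x, coboundary k b (u x) = P.kill k l (b + 1) (w x))
    (x : Fin (a + 2) → Q) : coboundary k b (coboundary k (a + 1) u x) = 0 := by
  rw [map_coboundary, funext huw, ← map_coboundary, row_closed, Pi.zero_apply, map_zero]

theorem hasPrimitive [Finite I] [Nonempty I] (hdetects : ∀ c < b, Detects k P.kernel c)
    {w : (Fin (a + 1) → Q) → (Fin (b + 1) → G) → k} (hw : w ∈ doubleCochains k S (a + 1) (b + 1))
    (row_closed : coboundary k (a + 1) w = 0)
    (column_closed : ∀ x, coboundary k (b + 1) (w x) = 0)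
    {l : List I} (hclass : ∀ x, kernelClass k S b
      ⟨P.kill k l (b + 1) (w x), P.kill_mem_kernelInvariantCocycles l
        (apply_mem_kernelInvariantCocycles hw (column_closed x))⟩ = 0) :
    P.HasPrimitive w := by
  induction b generalizing a l with
  | zero =>
    have const (x) (y y' : Fin 1 → G) : w x y = w x y' := by
      have closed := congrFun (column_closed x) (Fin.cons (y' 0) y)
      rw [coboundary_succ_apply, coboundary_zero_apply, Fin.tail_cons, Pi.zero_apply,
        sub_eq_zero] at closed
      rw [closed]
      refine congrArg (w x) (funext fun i => ?_)
      rw [Fin.fin_one_eq_zero i, Fin.cons_zero, Fin.cons_zero]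
    refine ⟨[Classical.arbitrary I], 0, zero_mem _, fun x => funext fun y => ?_⟩
    rw [map_zero, Pi.zero_apply, map_zero, kill, killing_cons_apply]
    exact (sub_eq_zero.2 (const x _ _)).symm
  | succ b ih =>
    have kill_closed (x) : coboundary k (b + 2) (P.kill k l (b + 2) (w x)) = 0 := by
      rw [coboundary_kill, column_closed, map_zero]
    obtain ⟨u, hu, huw⟩ :=
      exists_column_primitive (P.kill_mem_doubleCochains l hw) kill_closed hclass
    cases nonempty_fintype I
    refine HasPrimitive.of_column_primitive P hu huw <|
      ih (fun c hc => hdetects c (by omega)) (rowCoboundary_mem hu) (coboundary_coboundary k _ _)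
        (P.coboundary_rowCoboundary_eq_zero row_closed huw) (l := Finset.univ.toList) fun x => ?_
    rw [P.kernelClass_kill _ ⟨_, apply_mem_kernelInvariantCocycles (rowCoboundary_mem hu)
      (P.coboundary_rowCoboundary_eq_zero row_closed huw x)⟩]
    exact hdetects b (by omega) _ fun i =>
      P.res_kernel_killing_eq_zero (Finset.mem_toList.2 (Finset.mem_univ i)) _

lemma cohomologyClass_eq_zero_of_hasPrimitive {f : cocycles k G n}
    (htotal : ∀ i, res (P.total i) (cohomologyClass f) = 0)
    (primitive : P.HasPrimitive fun _ : Fin 1 → Q => f.1) : cohomologyClass f = 0 := by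
  obtain ⟨l, v, hv, hvf⟩ := primitive
  obtain ⟨hl, killing_eq⟩ := exists_cohomologyClass_killing_eq htotal l
  rw [← killing_eq, cohomologyClass_eq_zero_iff]
  refine ⟨v Fin.elim0, fun g y => ?_, ?_⟩
  · rw [← hv g Fin.elim0 y, Subsingleton.elim (fun i => S.rightHom g * _) Fin.elim0]
  · rw [Subsingleton.elim Fin.elim0 (Fin.tail (1 : Fin 1 → Q)), ← coboundary_zero_apply k v]
    exact hvf 1

theorem eq_zero_of_res_inl [Finite I] [Nonempty I] (hdetects : ∀ c < n, Detects k P.kernel c)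
    {x : ReducedCohomology k G n} (htotal : ∀ i, res (P.total i) x = 0) (hinl : res S.inl x = 0) :
    x = 0 := by
  obtain ⟨f, rfl⟩ := cohomologyClass_surjective x
  exact P.cohomologyClass_eq_zero_of_hasPrimitive htotal <|
    P.hasPrimitive hdetects (fun g _ y => f.2.1 g y)
      (funext fun x => by simp [coboundary_succ_apply, coboundary_zero_apply])
      (fun _ => f.2.2) (l := []) fun _ => hinl

end CommutingProjections

/-- An invariant homogeneous 1-cocycle is a character. -/
lemma eq_zero_of_forall_character_eq_one {A : Type*} [AddCommGroup A] [Module k A]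
    (hchar : ∀ χ : Q →* Multiplicative A, χ = 1) {ω : (Fin 2 → Q) → A}
    (invariant : ∀ q x, ω (fun i => q * x i) = ω x) (closed : coboundary k 2 ω = 0) : ω = 0 := by
  have translate (q a b : Q) : ω ![q * a, q * b] = ω ![a, b] := by
    rw [← invariant q ![a, b]]
    congr 1
    funext i
    fin_cases i <;> rfl
  have chain (a b c : Q) : ω ![a, c] = ω ![a, b] + ω ![b, c] := by
    have face := congrFun closed ![a, b, c]
    have face₀ : (0 : Fin 3).removeNth ![a, b, c] = ![b, c] := by
      funext i; fin_cases i <;> rfl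
    have face₁ : (1 : Fin 3).removeNth ![a, b, c] = ![a, c] := by
      funext i; fin_cases i <;> rfl
    have face₂ : (2 : Fin 3).removeNth ![a, b, c] = ![a, b] := by
      funext i; fin_cases i <;> rfl
    rw [coboundary_apply, Fin.sum_univ_three, face₀, face₁, face₂] at face
    simp only [Fin.val_zero, Fin.val_one, Fin.val_two, pow_zero, pow_one, one_smul, neg_smul,
      neg_one_sq, Pi.zero_apply] at face
    rw [eq_comm, ← sub_eq_zero, ← face]
    abel
  let χ : Q →* Multiplicative A :=
    MonoidHom.mk' (fun q => Multiplicative.ofAdd (ω ![1, q])) fun q q' => by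
      rw [← ofAdd_add, chain 1 q, ← translate q 1 q', mul_one]
  funext x
  have x_eq : x = ![x 0 * 1, x 0 * ((x 0)⁻¹ * x 1)] := by
    funext i
    fin_cases i <;> simp
  rw [x_eq, translate]
  exact congrArg Multiplicative.toAdd (DFunLike.congr_fun (hchar χ) _)

/-- The prism from `z ↦ ζ z` to `z ↦ ζ z * s`, which are intertwined by left translations. -/
lemma res_kernelClass_translate {Z : Type*} [Group Z] (ζ : Z →* N) {s : G}
    (hs : ∀ z, Commute s (S.inl (ζ z))) {w : (Fin (a + 1) → Q) → (Fin (b + 1) → G) → k}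
    (hw : w ∈ doubleCochains k S (a + 1) (b + 1))
    (column_closed : ∀ x, coboundary k (b + 1) (w x) = 0) (x : Fin (a + 1) → Q) :
    res ζ (kernelClass k S b
        ⟨_, apply_mem_kernelInvariantCocycles hw (column_closed fun i => S.rightHom s * x i)⟩)
      = res ζ (kernelClass k S b ⟨_, apply_mem_kernelInvariantCocycles hw (column_closed x)⟩) := by
  have translated := apply_mem_kernelInvariantCocycles hw (column_closed fun i =>
    S.rightHom s * x i)
  refine cohomologyClass_eq_iff.2 ⟨-prism k (fun z => S.inl (ζ z))
    (fun z => S.inl (ζ z) * s) b (w fun i => S.rightHom s * x i),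
    neg_mem fun c y => ?_, funext fun y => ?_⟩
  · refine (prism_comp k (a := (c * ·)) (a' := (S.inl (ζ c) * ·)) (by simp) (by simp [mul_assoc])
      b _ y).trans ?_
    exact congrArg (fun f => prism k _ _ b f y) (funext fun z => translated.1 (ζ c) z)
  · rw [map_neg, Pi.neg_apply, coboundary_prism_of_cocycle translated.2, neg_sub, Pi.sub_apply]
    have conjugate : w (fun i => S.rightHom s * x i) (fun i => S.inl (ζ (y i)) * s)
        = w x (S.inl ∘ ζ ∘ y) := by
      rw [← hw s x]
      exact congrArg _ (funext fun i => ((hs (y i)).eq).symm)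
    exact congrArg _ conjugate

lemma coboundary_comp_subtype_eq_zero {E M A : Type*} [AddCommGroup M] [Module k M]
    [AddCommGroup A] [Module k A] {p : Submodule k M} (L : p →ₗ[k] A) {w : (Fin n → E) → M}
    (hw : ∀ x, w x ∈ p) (closed : coboundary k n w = 0) :
    coboundary k n (fun x => L ⟨w x, hw x⟩) = 0 := by
  funext x
  rw [← map_coboundary, Pi.zero_apply]
  refine (congrArg L (Subtype.ext ?_)).trans (map_zero L)
  rw [← p.subtype_apply, map_coboundary]
  exact congrFun closed x

namespace CommutingProjections

variable {I : Type*} [Finite I] [Nonempty I] (P : CommutingProjections S I)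

/-- The last step of the zig-zag is obstructed by a character of `Q` with values in the
cohomology of `Z`. -/
theorem eq_zero_of_res_inl_of_characters (hdetects : ∀ c < n, Detects k P.kernel c)
    {Z : Type*} [Group Z] (ζ : Z →* N)
    (hζ : ∀ z : ReducedCohomology k N n, (∀ i, res (P.kernel i) z = 0) → res ζ z = 0 → z = 0)
    (hlift : ∀ q, ∃ s, S.rightHom s = q ∧ ∀ z, Commute s (S.inl (ζ z)))
    (hchar : ∀ χ : Q →* Multiplicative (ReducedCohomology k Z n), χ = 1)
    {x : ReducedCohomology k G (n + 1)} (htotal : ∀ i, res (P.total i) x = 0)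
    (hinl : res S.inl x = 0) : x = 0 := by
  obtain ⟨f, rfl⟩ := cohomologyClass_surjective x
  cases nonempty_fintype I
  let l : List I := Finset.univ.toList
  let w (_ : Fin 1 → Q) := f.1
  have hw : w ∈ doubleCochains k S 1 (n + 2) := fun g _ y => f.2.1 g y
  have row_closed : coboundary k 1 w = 0 :=
    funext fun x => by simp [w, coboundary_succ_apply, coboundary_zero_apply]
  obtain ⟨u₀, hu₀, hu₀w⟩ := exists_column_primitive hw (fun _ => f.2.2) fun _ => hinl
  have closed₀ := coboundary_rowCoboundary_eq_zero P row_closed (l := []) hu₀w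
  let u (x : Fin 1 → Q) := P.kill k l (n + 1) (u₀ x)
  have hu : u ∈ doubleCochains k S 1 (n + 1) := P.kill_mem_doubleCochains l hu₀
  have huw (x) : coboundary k (n + 1) (u x) = P.kill k l (n + 2) (w x) := by
    rw [coboundary_kill, hu₀w]
  have closed := P.coboundary_rowCoboundary_eq_zero row_closed huw
  have hδu (x) := apply_mem_kernelInvariantCocycles (rowCoboundary_mem hu) (closed x)
  have res_zero : (fun x => res ζ (kernelClass k S n ⟨_, hδu x⟩)) = 0 := by
    refine eq_zero_of_forall_character_eq_one (k := k) hchar (fun q x => ?_) <|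
      coboundary_comp_subtype_eq_zero (res ζ ∘ₗ kernelClass k S n) hδu
        (coboundary_coboundary k 1 u)
    obtain ⟨s, rfl, hs⟩ := hlift q
    exact res_kernelClass_translate ζ hs (rowCoboundary_mem hu) closed x
  have class_zero (x) : kernelClass k S n ⟨_, hδu x⟩ = 0 := by
    refine hζ _ (fun i => ?_) (congrFun res_zero x)
    have killed : kernelClass k S n ⟨_, hδu x⟩ = killing (fun i => res (P.kernel i)) l
        (kernelClass k S n
          ⟨_, apply_mem_kernelInvariantCocycles (rowCoboundary_mem hu₀) (closed₀ x)⟩) := by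
      rw [← P.kernelClass_kill]
      exact congrArg _ (Subtype.ext (map_coboundary k (P.kill k l (n + 1)) 1 u₀ x).symm)
    rw [killed]
    exact P.res_kernel_killing_eq_zero (Finset.mem_toList.2 (Finset.mem_univ i)) _
  exact P.cohomologyClass_eq_zero_of_hasPrimitive htotal <|
    .of_column_primitive P hu huw <|
      P.hasPrimitive hdetects (rowCoboundary_mem hu) (coboundary_coboundary k 1 u) closed
        (l := []) class_zero

end CommutingProjections

end Extensions

/-! ### Groups of block matrices -/

section PiGroups

variable {k : Type*} [CommRing k] {γ κ M : Type*} [Group M]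

open Classical in
/-- The functions on `κ` as an extension of those on a subset by those on its complement. -/
noncomputable def piExtension (M : Type*) [Group M] (U : Set κ) :
    GroupExtension ({c // c ∉ U} → M) (κ → M) ({c // c ∈ U} → M) where
  inl := MonoidHom.mk' (fun Y c => if hc : c ∈ U then 1 else Y ⟨c, hc⟩) fun X Y => by
    funext c
    by_cases hc : c ∈ U <;> simp [hc]
  rightHom := MonoidHom.pi fun c => Pi.evalMonoidHom _ c.1
  inl_injective X Y h := funext fun c => by simpa [c.2] using congrFun h c.1
  range_inl_eq_ker_rightHom := by
    ext X
    refine ⟨?_, fun hX => ⟨fun c => X c, funext fun c => ?_⟩⟩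
    · rintro ⟨Y, rfl⟩
      exact funext fun c => dif_pos c.2
    · by_cases hc : c ∈ U
      · exact (dif_pos hc).trans (congrFun hX ⟨c, hc⟩).symm
      · exact dif_neg hc
  rightHom_surjective Y :=
    ⟨fun c => if hc : c ∈ U then Y ⟨c, hc⟩ else 1, funext fun c => dif_pos c.2⟩

open Classical in
lemma piExtension_inl_apply (U : Set κ) (Y : {c // c ∉ U} → M) (c : κ) :
    (piExtension M U).inl Y c = if hc : c ∈ U then 1 else Y ⟨c, hc⟩ := rfl

open Classical in
/-- Deletion of the coordinates mapped by `p` to `i`. -/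
noncomputable def deleteFibre (M : Type*) [Group M] (p : κ → γ) (i : γ) : (κ → M) →* (κ → M) :=
  MonoidHom.mk' (fun X c => if p c = i then 1 else X c) fun X Y => by
    funext c
    by_cases hc : p c = i <;> simp [hc]

open Classical in
lemma deleteFibre_apply (p : κ → γ) (i : γ) (X : κ → M) (c : κ) :
    deleteFibre M p i X c = if p c = i then 1 else X c := rfl

lemma deleteFibre_idem (p : κ → γ) (i : γ) :
    (deleteFibre M p i).comp (deleteFibre M p i) = deleteFibre M p i := by
  refine MonoidHom.ext fun X => funext fun c => ?_
  by_cases hc : p c = i <;> simp [deleteFibre_apply, hc]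

lemma deleteFibre_comm (p : κ → γ) (i j : γ) :
    (deleteFibre M p i).comp (deleteFibre M p j)
      = (deleteFibre M p j).comp (deleteFibre M p i) := by
  refine MonoidHom.ext fun X => funext fun c => ?_
  by_cases hc : p c = i <;> simp [deleteFibre_apply, hc]

/-- The deletions of the fibres other than the one over `i`, as projections of the extension
attached to the latter. -/
noncomputable def deleteOtherFibres (M : Type*) [Group M] (p : κ → γ) {i : γ} {s : Finset γ}
    (hi : i ∉ s) : CommutingProjections (piExtension M (p ⁻¹' {i})) s where
  total j := deleteFibre M p j
  kernel j := deleteFibre M (fun c => p c.1) j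
  inl_kernel j Y := by
    funext c
    by_cases hc : p c = i <;> simp [piExtension_inl_apply, deleteFibre_apply, hc]
  rightHom_total j X := funext fun c =>
    if_neg fun h : p c = j => hi ((c.2.symm.trans h).symm ▸ j.2)
  kernel_idem j := deleteFibre_idem _ _
  kernel_comm j j' := deleteFibre_comm _ _ _

theorem detects_deleteFibre {s : Finset γ} {n : ℕ} (hn : n < s.card) {p : κ → γ}
    (hp : ∀ c, p c ∈ s) : Detects k (fun i : s => deleteFibre M p i) n := by
  classical
  induction s using Finset.induction_on generalizing κ n with
  | empty => simp at hn
  | insert i s hi ih =>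
    intro x hx
    obtain rfl | hn₀ := n.eq_zero_or_pos
    · exact subsingleton_degree_zero.elim _ _
    rw [Finset.card_insert_of_notMem hi] at hn
    have : Nonempty s := (Finset.card_pos.1 (by omega)).to_subtype
    refine (deleteOtherFibres M p hi).eq_zero_of_res_inl
      (fun c hc => ih (by omega) fun a => (Finset.mem_insert.1 (hp a.1)).resolve_left a.2)
      (fun j => hx ⟨j, Finset.mem_insert_of_mem j.2⟩) ?_
    have delete_inl : (deleteFibre M p i).comp (piExtension M (p ⁻¹' {i})).inl
        = (piExtension M (p ⁻¹' {i})).inl := by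
      refine MonoidHom.ext fun Y => funext fun c => ?_
      by_cases hc : p c = i <;> simp [piExtension_inl_apply, deleteFibre_apply, hc]
    rw [← delete_inl]
    exact res_comp_eq_zero (hx ⟨i, Finset.mem_insert_self i s⟩) _

end PiGroups

/-- The group of block matrices with a diagonal block `A` in `Γ`, columns `X c` in `V` and diagonal
scalars `t`, where column `c` is multiplied by the scalar with index `b c`. -/
@[ext]
structure BlockGroup (F Γ V : Type*) {κ τ : Type*} [Field F] (b : κ → τ) where
  A : Γ
  X : κ → V
  t : τ → Fˣ

namespace BlockGroup

variable {F Γ V κ τ : Type*} [Field F] {b : κ → τ} [Group Γ] [AddCommGroup V]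

instance : One (BlockGroup F Γ V b) := ⟨⟨1, 0, 1⟩⟩

@[simp] lemma one_A : (1 : BlockGroup F Γ V b).A = 1 := rfl

@[simp] lemma one_X (c : κ) : (1 : BlockGroup F Γ V b).X c = 0 := rfl

@[simp] lemma one_t : (1 : BlockGroup F Γ V b).t = 1 := rfl

variable [Module F V] [DistribMulAction Γ V]

instance : Mul (BlockGroup F Γ V b) :=
  ⟨fun g h => ⟨g.A * h.A, fun c => g.A • h.X c + h.t (b c) • g.X c, g.t * h.t⟩⟩

instance : Inv (BlockGroup F Γ V b) :=
  ⟨fun g => ⟨g.A⁻¹, fun c => -((g.t (b c))⁻¹ • g.A⁻¹ • g.X c), g.t⁻¹⟩⟩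

@[simp] lemma mul_A (g h : BlockGroup F Γ V b) : (g * h).A = g.A * h.A := rfl

@[simp] lemma mul_X (g h : BlockGroup F Γ V b) (c : κ) :
    (g * h).X c = g.A • h.X c + h.t (b c) • g.X c := rfl

@[simp] lemma mul_t (g h : BlockGroup F Γ V b) : (g * h).t = g.t * h.t := rfl

@[simp] lemma inv_A (g : BlockGroup F Γ V b) : g⁻¹.A = g.A⁻¹ := rfl

@[simp] lemma inv_X (g : BlockGroup F Γ V b) (c : κ) :
    g⁻¹.X c = -((g.t (b c))⁻¹ • g.A⁻¹ • g.X c) := rfl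

@[simp] lemma inv_t (g : BlockGroup F Γ V b) : g⁻¹.t = g.t⁻¹ := rfl

variable [SMulCommClass Γ F V]

instance : Group (BlockGroup F Γ V b) := Group.ofLeftAxioms
  (fun g h l => BlockGroup.ext (mul_assoc ..) (funext fun c => by
    simp only [mul_X, mul_A, mul_t, smul_add, Pi.mul_apply, mul_smul, add_assoc]
    rw [smul_comm g.A (l.t (b c)), smul_comm (h.t (b c)) (l.t (b c))]) (mul_assoc ..))
  (fun g => BlockGroup.ext (one_mul _) (funext fun c => by simp) (one_mul _))
  (fun g => BlockGroup.ext (inv_mul_cancel _) (funext fun c => by simp) (inv_mul_cancel _))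

section Map

variable {Γ' V' κ' : Type*} {b' : κ' → τ} [Group Γ'] [AddCommGroup V'] [Module F V']
  [DistribMulAction Γ' V'] [SMulCommClass Γ' F V']

/-- The homomorphism of block groups given by a homomorphism of the blocks `Γ` and a compatible
map on columns. -/
@[simps!]
def map (α : Γ →* Γ') (f : (κ → V) → κ' → V')
    (hf : ∀ (A : Γ) (t : τ → Fˣ) (X Y : κ → V) (c : κ'),
      f (fun c => A • X c + t (b c) • Y c) c = α A • f X c + t (b' c) • f Y c) :
    BlockGroup F Γ V b →* BlockGroup F Γ' V' b' :=
  MonoidHom.mk' (fun g => ⟨α g.A, f g.X, g.t⟩) fun _ _ =>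
    BlockGroup.ext (map_mul ..) (funext fun _ => hf ..) rfl

end Map

open Classical in
/-- Replacement of the columns in `U` by zero. -/
@[simps!]
noncomputable def delete (U : Set κ) : BlockGroup F Γ V b →* BlockGroup F Γ V b :=
  map (MonoidHom.id Γ) (fun X c => if c ∈ U then 0 else X c) fun A t X Y c => by
    by_cases hc : c ∈ U <;> simp [hc]

/-- The block group as an extension of its diagonal part by its columns. -/
def columnExtension : GroupExtension (κ → Multiplicative V) (BlockGroup F Γ V b)
    (Γ × (τ → Fˣ)) where
  inl := MonoidHom.mk' (fun X => ⟨1, fun c => (X c).toAdd, 1⟩) fun X Y =>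
    BlockGroup.ext (one_mul _).symm (funext fun c => by simp [add_comm]) (one_mul _).symm
  rightHom := MonoidHom.mk' (fun g => (g.A, g.t)) fun _ _ => rfl
  inl_injective _ _ h := congrArg BlockGroup.X h
  range_inl_eq_ker_rightHom := by
    ext g
    refine ⟨?_, fun hg => ⟨fun c => Multiplicative.ofAdd (g.X c), ?_⟩⟩
    · rintro ⟨X, rfl⟩
      rfl
    · exact BlockGroup.ext (congrArg Prod.fst hg).symm rfl (congrArg Prod.snd hg).symm
  rightHom_surjective y := ⟨⟨y.1, 0, y.2⟩, rfl⟩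

variable {k γ : Type*} [CommRing k]

/-- The deletions of the fibres of `p`, as projections of the extension by columns. -/
noncomputable def deleteFibres (p : κ → γ) (s : Finset γ) :
    CommutingProjections (columnExtension (F := F) (Γ := Γ) (V := V) (b := b)) s where
  total i := delete (p ⁻¹' {i.1})
  kernel i := deleteFibre (Multiplicative V) p i
  inl_kernel i X := by
    refine BlockGroup.ext rfl (funext fun c => ?_) rfl
    by_cases hc : p c = i <;> simp [columnExtension, deleteFibre_apply, hc]
  rightHom_total _ _ := rfl
  kernel_idem _ := deleteFibre_idem _ _
  kernel_comm _ _ := deleteFibre_comm _ _ _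

theorem detects_delete_fibre {s : Finset γ} {n : ℕ} (hn : n < s.card) {p : κ → γ}
    (hp : ∀ c, p c ∈ s) :
    Detects k (fun i : s => delete (F := F) (Γ := Γ) (V := V) (b := b) (p ⁻¹' {i.1})) n := by
  intro x hx
  have : Nonempty s := (Finset.card_pos.1 (by omega)).to_subtype
  refine (deleteFibres p s).eq_zero_of_res_inl
    (fun c hc => detects_deleteFibre (hc.trans hn) hp) hx (detects_deleteFibre hn hp _ fun i => ?_)
  have inl_delete : (columnExtension (F := F) (Γ := Γ) (V := V) (b := b)).inl.comp
      (deleteFibre (Multiplicative V) p i) = (delete (p ⁻¹' {i.1})).comp columnExtension.inl :=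
    MonoidHom.ext fun X => (deleteFibres p s).inl_kernel i X
  rw [res_res, inl_delete]
  exact res_comp_eq_zero (hx i) _

section Copies

variable {ι : Type*}

open Classical in
/-- Multiplication of the columns of the block `β` by the scalar `a`. -/
@[simps!]
noncomputable def scaleBlock (β : τ) (a : F) : BlockGroup F Γ V b →* BlockGroup F Γ V b :=
  map (MonoidHom.id Γ) (fun X c => if b c = β then a • X c else X c) fun A t X Y c => by
    split_ifs
    · rw [smul_add, ← smul_comm A a, smul_comm a (t (b c)), MonoidHom.id_apply]
    · rfl

lemma res_scaleBlock (β : τ) {a : F} (ha : a ≠ 0) {n : ℕ}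
    (x : ReducedCohomology k (BlockGroup F Γ V b) n) : res (scaleBlock β a) x = x := by
  classical
  conv_rhs => rw [← res_id x]
  let scalar : BlockGroup F Γ V b := ⟨1, 0, fun i => if i = β then Units.mk0 a ha else 1⟩
  have conj (g : BlockGroup F Γ V b) :
      scalar * scaleBlock β a g = MonoidHom.id _ g * scalar := by
    refine BlockGroup.ext (by simp [scalar]) (funext fun c => ?_) (mul_comm ..)
    by_cases hc : b c = β <;> simp [scalar, hc, Units.smul_def]
  exact res_eq_of_conj scalar conj x

open Classical in
/-- The homomorphism from a block group with a copy of each column for every element of `ι`,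
which adds the copies indexed by `S` in the block `β` and selects the copy `i₀` elsewhere. -/
@[simps!]
noncomputable def sumCopies (i₀ : ι) (β : τ) (S : Finset ι) :
    BlockGroup F Γ V (fun c : κ × ι => b c.1) →* BlockGroup F Γ V b :=
  map (MonoidHom.id Γ) (fun X c => if b c = β then ∑ i ∈ S, X (c, i) else X (c, i₀))
    fun A t X Y c => by
      split_ifs
      · rw [Finset.sum_add_distrib, Finset.smul_sum, Finset.smul_sum, MonoidHom.id_apply]
      · rfl

open Classical in
/-- The homomorphism to a block group with a copy of each column for every element of `ι`, where
the copies in the block `β` are weighted by `v`. -/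
@[simps!]
noncomputable def weightedDiagonal (β : τ) (v : ι → F) :
    BlockGroup F Γ V b →* BlockGroup F Γ V (fun c : κ × ι => b c.1) :=
  map (MonoidHom.id Γ) (fun X c => if b c.1 = β then v c.2 • X c.1 else X c.1)
    fun A t X Y c => by
      split_ifs
      · rw [smul_add, ← smul_comm A (v c.2), smul_comm (v c.2) (t (b c.1)), MonoidHom.id_apply]
      · rfl

lemma sumCopies_comp_weightedDiagonal (i₀ : ι) (β : τ) (v : ι → F) (S : Finset ι) :
    (sumCopies i₀ β S).comp (weightedDiagonal β v)
      = scaleBlock (Γ := Γ) (V := V) (b := b) β (∑ i ∈ S, v i) := by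
  refine MonoidHom.ext fun g => BlockGroup.ext rfl (funext fun c => ?_) rfl
  by_cases hc : b c = β <;> simp [hc, Finset.sum_smul]

open Classical in
/-- The partition of the columns of `κ × ι` by their block, the block `β` being further divided
according to the copy. -/
noncomputable def refinedBlock (b : κ → τ) (β : τ) (c : κ × ι) : τ ⊕ ι :=
  if b c.1 = β then Sum.inr c.2 else Sum.inl (b c.1)

lemma sumCopies_comp_delete_inl (i₀ : ι) {β β' : τ} (hβ : β' ≠ β) (S : Finset ι) :
    (sumCopies i₀ β S).comp (delete (refinedBlock b β ⁻¹' {Sum.inl β'}))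
      = (delete (F := F) (Γ := Γ) (V := V) (b := b) (b ⁻¹' {β'})).comp (sumCopies i₀ β S) := by
  refine MonoidHom.ext fun g => BlockGroup.ext rfl (funext fun c => ?_) rfl
  by_cases hc : b c = β
  · simp [refinedBlock, hc, hβ.symm]
  · by_cases hc' : b c = β' <;> simp [refinedBlock, hc, hc', hβ]

open Classical in
lemma sumCopies_comp_delete_inr (i₀ : ι) (β : τ) (S : Finset ι) (i : ι) :
    (sumCopies i₀ β S).comp (delete (refinedBlock b β ⁻¹' {Sum.inr i}))
      = sumCopies (F := F) (Γ := Γ) (V := V) (b := b) i₀ β (S.erase i) := by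
  refine MonoidHom.ext fun g => BlockGroup.ext rfl (funext fun c => ?_) rfl
  by_cases hc : b c = β
  · simp [refinedBlock, hc, ← Finset.filter_ne', Finset.sum_filter, ite_not]
  · simp [refinedBlock, hc]

end Copies

end BlockGroup

section ZeroSumFree

/-- A family of elements with no vanishing sum over a nonempty finite set of indices. -/
def ZeroSumFree {A ι : Type*} [AddCommMonoid A] (v : ι → A) : Prop :=
  ∀ S : Finset ι, S.Nonempty → ∑ i ∈ S, v i ≠ 0

lemma zeroSumFree_basis {p : ℕ} [Fact p.Prime] {A ι : Type*} [AddCommGroup A] [Module (ZMod p) A]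
    (B : Module.Basis ι (ZMod p) A) : ZeroSumFree fun i : ι × Fin (p - 1) => B i.1 := by
  classical
  rintro S ⟨⟨i, a⟩, hS⟩ sum_eq
  have coordinate : ((S.filter fun c => c.1 = i).card : ZMod p) = 0 := by
    simpa [Finsupp.single_apply, Finset.sum_boole] using congrArg (B.repr · i) sum_eq
  have le_card : (S.filter fun c => c.1 = i).card ≤ p - 1 := by
    refine (Finset.card_le_card_of_injOn Prod.snd (fun _ _ => Finset.mem_univ _) ?_).trans_eq
      (Finset.card_fin (p - 1))
    rintro ⟨j, c⟩ hj ⟨j', c'⟩ hj' rfl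
    simp_all
  have card_pos : 0 < (S.filter fun c => c.1 = i).card :=
    Finset.card_pos.2 ⟨(i, a), by simp [hS]⟩
  have dvd := Nat.le_of_dvd card_pos ((ZMod.natCast_eq_zero_iff _ _).1 coordinate)
  have := (Fact.out : p.Prime).two_le
  omega

lemma exists_zeroSumFree {p r : ℕ} [Fact p.Prime] (F : Type*) [Field F] [Fintype F]
    (hF : Fintype.card F = p ^ r) : ∃ v : Fin r × Fin (p - 1) → F, ZeroSumFree v := by
  have := charP_of_card_eq_prime_pow hF
  let _ := ZMod.algebra F p
  have finrank_eq : Module.finrank (ZMod p) F = r := by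
    have card_eq := Module.card_eq_pow_finrank (K := ZMod p) (V := F)
    rw [hF, ZMod.card] at card_eq
    exact (Nat.pow_right_injective (Fact.out : p.Prime).two_le card_eq).symm
  exact ⟨_, zeroSumFree_basis (Module.finBasisOfFinrankEq (ZMod p) F finrank_eq)⟩

end ZeroSumFree

section AlternatingSum

variable {M ι : Type*} [AddCommGroup M]

lemma sum_powerset_insert_neg_one_pow [DecidableEq ι] (a : Finset ι → M) {i : ι} {s : Finset ι}
    (hi : i ∉ s) :
    ∑ S ∈ (insert i s).powerset, (-1 : ℤ) ^ S.card • a (S.erase i) = 0 := by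
  rw [Finset.sum_powerset_insert hi, ← Finset.sum_add_distrib]
  refine Finset.sum_eq_zero fun S hS => ?_
  have hiS : i ∉ S := fun h => hi (Finset.mem_powerset.1 hS h)
  rw [Finset.card_insert_of_notMem hiS, Finset.erase_insert hiS, Finset.erase_eq_of_notMem hiS,
    pow_succ, mul_neg_one, neg_smul, add_neg_cancel]

variable [Fintype ι]

lemma sum_neg_one_pow_card_smul_erase [DecidableEq ι] (a : Finset ι → M) (i : ι) :
    ∑ S : Finset ι, (-1 : ℤ) ^ S.card • a (S.erase i) = 0 := by
  have := sum_powerset_insert_neg_one_pow a (Finset.notMem_erase i Finset.univ)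
  rwa [Finset.insert_erase (Finset.mem_univ i), Finset.powerset_univ] at this

lemma sum_neg_one_pow_card_smul_of_const {a : Finset ι → M} {m : M}
    (ha : ∀ S : Finset ι, S.Nonempty → a S = m) (ha₀ : a ∅ = 0) [Nonempty ι] :
    ∑ S : Finset ι, (-1 : ℤ) ^ S.card • a S = -m := by
  classical
  have split (S : Finset ι) :
      (-1 : ℤ) ^ S.card • a S = (-1 : ℤ) ^ S.card • m - if S = ∅ then m else 0 := by
    obtain rfl | hS := S.eq_empty_or_nonempty
    · simp [ha₀]
    · simp [ha S hS, hS.ne_empty]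
  have alternating := Finset.sum_powerset_neg_one_pow_card_of_nonempty
    (Finset.univ_nonempty (α := ι))
  rw [Finset.powerset_univ] at alternating
  simp only [split, Finset.sum_sub_distrib, ← Finset.sum_smul, alternating, zero_smul, zero_sub,
    Finset.sum_ite_eq', Finset.mem_univ, if_true]

end AlternatingSum

namespace BlockGroup

variable {k F Γ V κ τ ι : Type*} [CommRing k] [Field F] {b : κ → τ} [Group Γ] [AddCommGroup V]
  [Module F V] [DistribMulAction Γ V] [SMulCommClass Γ F V]

lemma sum_res_sumCopies_eq_zero [Fintype ι] {T : Finset τ} (hT : ∀ c, b c ∈ T) {β : τ}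
    (hβ : β ∈ T) {n : ℕ} (hn : n + 1 < T.card + Fintype.card ι) (i₀ : ι)
    {x : ReducedCohomology k (BlockGroup F Γ V b) n}
    (hx : ∀ i : T, res (delete (b ⁻¹' {i.1})) x = 0) :
    ∑ S : Finset ι, (-1 : ℤ) ^ S.card • res (sumCopies i₀ β S) x = 0 := by
  classical
  have hcard : ((T.erase β).disjSum (Finset.univ : Finset ι)).card
      = T.card - 1 + Fintype.card ι := by
    rw [Finset.card_disjSum, Finset.card_erase_of_mem hβ, Finset.card_univ]
  have hpos : 0 < T.card := Finset.card_pos.2 ⟨β, hβ⟩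
  refine detects_delete_fibre (p := refinedBlock b β)
    (s := (T.erase β).disjSum Finset.univ) (by omega) (fun c => ?_) _ ?_
  · by_cases hc : b c.1 = β <;> simp [refinedBlock, hc, hT]
  · rintro ⟨β' | i, hi⟩
    · rw [Finset.inl_mem_disjSum, Finset.mem_erase] at hi
      simp only [map_sum, map_zsmul, res_res, sumCopies_comp_delete_inl i₀ hi.1]
      exact Finset.sum_eq_zero fun S _ => by
        rw [res_comp_eq_zero (hx ⟨β', hi.2⟩), smul_zero]
    · simp only [map_sum, map_zsmul, res_res, sumCopies_comp_delete_inr]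
      exact sum_neg_one_pow_card_smul_erase (fun S => res (sumCopies i₀ β S) x) i

/- The weighted diagonal followed by the sum over `S` scales the block `β` by the sum of `v` over
`S`, an inner automorphism for nonempty `S`, so the alternating sum over `S` isolates the class. -/
theorem detects_delete_block [Fintype ι] [Nonempty ι] {v : ι → F} (hv : ZeroSumFree v)
    {T : Finset τ} (hT : ∀ c, b c ∈ T) (hne : T.Nonempty) {n : ℕ}
    (hn : n + 1 < T.card + Fintype.card ι) :
    Detects k (fun i : T => delete (F := F) (Γ := Γ) (V := V) (b := b) (b ⁻¹' {i.1})) n := by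
  classical
  intro x hx
  obtain ⟨β, hβ⟩ := hne
  obtain ⟨i₀⟩ := ‹Nonempty ι›
  have scaleBlock_zero : scaleBlock β (0 : F) = delete (Γ := Γ) (V := V) (b := b) (b ⁻¹' {β}) := by
    refine MonoidHom.ext fun g => BlockGroup.ext rfl (funext fun c => ?_) rfl
    by_cases hc : b c = β <;> simp [hc]
  have sum_eq := congrArg (res (weightedDiagonal β v)) (sum_res_sumCopies_eq_zero hT hβ hn i₀ hx)
  simp only [map_sum, map_zsmul, res_res, sumCopies_comp_weightedDiagonal, map_zero] at sum_eq
  rw [sum_neg_one_pow_card_smul_of_const (m := x)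
    (fun S hS => res_scaleBlock β (hv S hS) x)
    (by rw [Finset.sum_empty, scaleBlock_zero]; exact hx ⟨β, hβ⟩)] at sum_eq
  exact neg_eq_zero.1 sum_eq

end BlockGroup

/-! ### Parabolic subgroups of linear groups -/

namespace BlockGroup

variable {F Γ V κ τ : Type*} [Field F] {b : κ → τ}

variable [Group Γ] [AddCommGroup V] [Module F V] [DistribMulAction Γ V] [SMulCommClass Γ F V]
  {Γ' V' : Type*} [Group Γ'] [AddCommGroup V'] [Module F V'] [DistribMulAction Γ' V']
  [SMulCommClass Γ' F V']

/-- The homomorphism of block groups given by an equivariant linear map. -/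
@[simps!]
def mapLinear (α : Γ →* Γ') (L : V →ₗ[F] V') (hL : ∀ A v, L (A • v) = α A • L v) :
    BlockGroup F Γ V b →* BlockGroup F Γ' V' b :=
  map α (fun X c => L (X c)) fun A t X Y c => by simp [hL, Units.smul_def]

lemma mapLinear_comp_delete (α : Γ →* Γ') (L : V →ₗ[F] V') (hL : ∀ A v, L (A • v) = α A • L v)
    (U : Set κ) :
    (mapLinear (b := b) α L hL).comp (delete U) = (delete U).comp (mapLinear α L hL) := by
  refine MonoidHom.ext fun g => BlockGroup.ext rfl (funext fun c => ?_) rfl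
  by_cases hc : c ∈ U <;> simp [hc]

lemma res_mapLinear_eq_res_delete {k : Type*} [CommRing k] (α : Γ →* Γ') (L : V →ₗ[F] V')
    (hL : ∀ A v, L (A • v) = α A • L v) {U : Set κ} {n : ℕ}
    {x : ReducedCohomology k (BlockGroup F Γ' V' b) n} (hx : x = res (delete U) x) :
    res (mapLinear α L hL) x = res (delete U) (res (mapLinear α L hL) x) := by
  rw [res_res, mapLinear_comp_delete, ← res_res, ← hx]

lemma index_range_mapLinear_id [DistribMulAction Γ' V] [SMulCommClass Γ' F V] (α : Γ →* Γ')
    (hα : ∀ (A : Γ) (v : V), A • v = α A • v) :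
    (mapLinear (b := b) α (LinearMap.id (R := F)) hα).range.index = α.range.index := by
  let diagonal : BlockGroup F Γ' V b →* Γ' := MonoidHom.mk' BlockGroup.A fun _ _ => rfl
  have range_eq : (mapLinear (b := b) α (LinearMap.id (R := F)) hα).range
      = α.range.comap diagonal := by
    ext g
    constructor
    · rintro ⟨g, rfl⟩
      exact ⟨g.A, rfl⟩
    · rintro ⟨A, hA⟩
      exact ⟨⟨A, g.X, g.t⟩, BlockGroup.ext hA rfl rfl⟩
  rw [range_eq, Subgroup.index_comap_of_surjective]
  exact fun A => ⟨⟨A, 0, 1⟩, rfl⟩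

end BlockGroup

section TransferToIndex

variable {k G G' M : Type*} [CommRing k] [Group G] [Group G'] [Group M]

lemma res_injective_of_ker_le_range [Finite M] {ι : G' →* G} (hι : Function.Injective ι)
    {χ : G →* M} (hχ : χ.ker ≤ ι.range) (hM : IsUnit (Nat.card M : k)) {n : ℕ} :
    Function.Injective (res ι : ReducedCohomology k G n → ReducedCohomology k G' n) := by
  have index_dvd : ι.range.index ∣ Nat.card M := by
    refine (Subgroup.index_dvd_of_le hχ).trans ?_
    rw [Subgroup.index_ker]
    exact Subgroup.card_subgroup_dvd_card _
  have : ι.range.FiniteIndex := ⟨ne_zero_of_dvd_ne_zero Nat.card_pos.ne' index_dvd⟩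
  exact res_injective_of_isUnit_index hι (isUnit_of_dvd_unit (Nat.cast_dvd_cast index_dvd) hM)

lemma isUnit_card_units {F : Type*} [Field F] [Finite F] (hk : (Nat.card F : k) = 0) :
    IsUnit (Nat.card Fˣ : k) := by
  have := Fintype.ofFinite F
  rw [Nat.card_units, Nat.cast_sub Nat.card_pos, hk, Nat.cast_one, zero_sub]
  exact isUnit_one.neg

end TransferToIndex

section LinearAutomorphisms

variable {F V V' : Type*} [Field F] [AddCommGroup V] [Module F V] [AddCommGroup V'] [Module F V']

instance [Finite V] : Finite (V ≃ₗ[F] V) :=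
  Finite.of_injective (fun g : V ≃ₗ[F] V => (g : V → V)) DFunLike.coe_injective

/-- Transport of linear automorphisms along a linear equivalence. -/
@[simps!]
def conjugation (e : V ≃ₗ[F] V') : (V ≃ₗ[F] V) →* (V' ≃ₗ[F] V') :=
  MonoidHom.mk' (fun g => (e.symm.trans g).trans e) fun g h => by ext; simp

lemma conjugation_comp_symm (e : V ≃ₗ[F] V') :
    (conjugation e).comp (conjugation e.symm) = MonoidHom.id _ := by
  ext
  simp

lemma linearEquiv_smul (e : V ≃ₗ[F] V') (g : V ≃ₗ[F] V) (v : V) :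
    e.toLinearMap (g • v) = conjugation e g • e.toLinearMap v := by simp

variable (F V) in
/-- The stabilization map of linear automorphisms, which extends them by the identity on the new
coordinate. -/
def stabilize : (V ≃ₗ[F] V) →* ((V × F) ≃ₗ[F] (V × F)) :=
  MonoidHom.mk' (fun g => g.prodCongr (LinearEquiv.refl F F)) fun _ _ => rfl

@[simp] lemma stabilize_apply (g : V ≃ₗ[F] V) (w : V × F) :
    stabilize F V g w = (g w.1, w.2) := rfl

lemma natCard_linearEquiv [Finite F] [Finite V] {n : ℕ} (hn : Module.finrank F V = n) :
    Nat.card (V ≃ₗ[F] V) = ∏ i : Fin n, (Nat.card F ^ n - Nat.card F ^ (i : ℕ)) := by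
  have := Fintype.ofFinite F
  rw [Nat.card_eq_fintype_card (α := F), ← Matrix.card_GL_field n]
  exact (Nat.card_congr ((Matrix.GeneralLinearGroup.toLin'
    (Module.finBasisOfFinrankEq F V hn)).trans
    (LinearMap.GeneralLinearGroup.generalLinearEquiv F V)).toEquiv).symm

variable (F V) in
/-- The exchange of the last two coordinates. -/
@[simps]
def swapLast : ((V × F) × F) ≃ₗ[F] ((V × F) × F) where
  toFun w := ((w.1.1, w.2), w.1.2)
  invFun w := ((w.1.1, w.2), w.1.2)
  map_add' _ _ := rfl
  map_smul' _ _ := rfl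

end LinearAutomorphisms

/-- The stabilizer of the subspace `V` of `V × F`, if `Γ` is the full linear group of `V`. -/
abbrev Parabolic (F Γ V : Type*) [Field F] := BlockGroup F Γ V (id : Unit → Unit)

namespace Parabolic

section Action

variable {F Γ V : Type*} [Field F] [Group Γ] [AddCommGroup V] [Module F V] [DistribMulAction Γ V]

instance : SMul (Parabolic F Γ V) (V × F) :=
  ⟨fun g w => (g.A • w.1 + w.2 • g.X (), g.t () • w.2)⟩

@[simp] lemma smul_fst (g : Parabolic F Γ V) (w : V × F) :
    (g • w).1 = g.A • w.1 + w.2 • g.X () := rfl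

@[simp] lemma smul_snd (g : Parabolic F Γ V) (w : V × F) : (g • w).2 = g.t () • w.2 := rfl

variable [SMulCommClass Γ F V]

instance : DistribMulAction (Parabolic F Γ V) (V × F) where
  one_smul w := by ext <;> simp
  mul_smul g h w := by
    ext
    · simp only [smul_fst, smul_snd, BlockGroup.mul_A, BlockGroup.mul_X, mul_smul, smul_add, id,
        smul_eq_mul, Units.smul_def, add_assoc]
      rw [smul_comm g.A w.2, smul_comm w.2 (h.t () : F)]
    · simp [mul_smul]
  smul_zero g := by ext <;> simp
  smul_add g v w := by
    ext
    · simp only [smul_fst, Prod.fst_add, Prod.snd_add, smul_add, add_smul]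
      abel
    · simp

instance : SMulCommClass (Parabolic F Γ V) F (V × F) where
  smul_comm g a w := by
    ext
    · simp only [smul_fst, Prod.smul_fst, Prod.smul_snd, smul_add, smul_eq_mul, mul_smul]
      rw [smul_comm g.A a]
    · simp only [smul_snd, Prod.smul_snd, smul_eq_mul, Units.smul_def]
      ring

end Action

variable (F V : Type*) [Field F] [AddCommGroup V] [Module F V]

/-- The inclusion of the parabolic subgroup into the linear group of `V × F`. -/
def toLinearEquiv : Parabolic F (V ≃ₗ[F] V) V →* ((V × F) ≃ₗ[F] (V × F)) :=
  DistribMulAction.toModuleAut F (V × F)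

variable {F V}

@[simp] lemma toLinearEquiv_apply (g : Parabolic F (V ≃ₗ[F] V) V) (w : V × F) :
    toLinearEquiv F V g w = g • w := rfl

lemma toLinearEquiv_injective : Function.Injective (toLinearEquiv F V) := by
  intro g h eq
  have smul_eq (w : V × F) : g • w = h • w := DFunLike.congr_fun eq w
  refine BlockGroup.ext (LinearEquiv.ext fun v => ?_) (funext fun _ => ?_) (funext fun _ => ?_)
  · simpa using congrArg Prod.fst (smul_eq (v, 0))
  · simpa using congrArg Prod.fst (smul_eq (0, 1))
  · ext
    simpa [Units.smul_def] using congrArg Prod.snd (smul_eq (0, 1))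

lemma natCard [Finite F] [Finite V] :
    Nat.card (Parabolic F (V ≃ₗ[F] V) V)
      = Nat.card (V ≃ₗ[F] V) * (Nat.card F ^ Module.finrank F V * (Nat.card F - 1)) := by
  have e : Parabolic F (V ≃ₗ[F] V) V ≃ (V ≃ₗ[F] V) × (V × Fˣ) :=
    { toFun g := (g.A, g.X (), g.t ())
      invFun y := ⟨y.1, fun _ => y.2.1, fun _ => y.2.2⟩ }
  rw [Nat.card_congr e, Nat.card_prod, Nat.card_prod, Nat.card_units,
    Module.natCard_eq_pow_finrank (K := F) (V := V)]

lemma card_sub_one_mul_index [Finite F] [Finite V] :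
    (Nat.card F - 1) * (toLinearEquiv F V).range.index
      = Nat.card F ^ (Module.finrank F V + 1) - 1 := by
  set q := Nat.card F with hq
  have one_lt : 1 < q := Finite.one_lt_card
  have finrank_prod : Module.finrank F (V × F) = Module.finrank F V + 1 := by
    have : Module.Finite F V := Module.Finite.of_finite
    rw [Module.finrank_prod, Module.finrank_self]
  set n := Module.finrank F V with hn
  have lagrange := Subgroup.card_mul_index (toLinearEquiv F V).range
  rw [← Nat.card_congr (MonoidHom.ofInjective toLinearEquiv_injective).toEquiv, natCard,
    natCard_linearEquiv finrank_prod, natCard_linearEquiv hn.symm, Fin.prod_univ_succ, ← hq, ← hn]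
    at lagrange
  have prod_succ : ∏ i : Fin n, (q ^ (n + 1) - q ^ (i.succ : ℕ))
      = q ^ n * ∏ i : Fin n, (q ^ n - q ^ (i : ℕ)) := by
    have factor (i : Fin n) : q ^ (n + 1) - q ^ (i.succ : ℕ) = q * (q ^ n - q ^ (i : ℕ)) := by
      rw [Fin.val_succ, pow_succ', pow_succ', Nat.mul_sub]
    simp only [factor, Finset.prod_mul_distrib, Finset.prod_const, Finset.card_univ,
      Fintype.card_fin]
  have pos : 0 < q ^ n * ∏ i : Fin n, (q ^ n - q ^ (i : ℕ)) :=
    Nat.mul_pos (pow_pos (by omega) _) (Finset.prod_pos fun i _ =>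
      Nat.sub_pos_of_lt (Nat.pow_lt_pow_right one_lt i.2))
  rw [prod_succ, Fin.val_zero, pow_zero] at lagrange
  exact Nat.eq_of_mul_eq_mul_left pos (by linear_combination lagrange)

variable {k : Type*} [CommRing k]

lemma isUnit_index_range_toLinearEquiv [Finite F] [Finite V] (hk : (Nat.card F : k) = 0) :
    IsUnit ((toLinearEquiv F V).range.index : k) := by
  have index_mul := congrArg (Nat.cast : ℕ → k) (card_sub_one_mul_index (F := F) (V := V))
  rw [Nat.cast_mul, Nat.cast_sub (Nat.one_le_pow _ _ Nat.card_pos), Nat.cast_pow, hk,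
    zero_pow (Nat.succ_ne_zero _), Nat.cast_one, zero_sub] at index_mul
  exact isUnit_of_mul_isUnit_right (index_mul ▸ isUnit_one.neg)

variable (F V) in
/-- The block diagonal subgroup of the parabolic subgroup. -/
def levi : (V ≃ₗ[F] V) × Fˣ →* Parabolic F (V ≃ₗ[F] V) V :=
  MonoidHom.mk' (fun g => ⟨g.1, 0, fun _ => g.2⟩) fun _ _ =>
    BlockGroup.ext rfl (funext fun _ => by simp) rfl

variable (F V) in
/-- The projection of the parabolic subgroup to its diagonal blocks. -/
def toLevi : Parabolic F (V ≃ₗ[F] V) V →* (V ≃ₗ[F] V) × Fˣ :=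
  MonoidHom.mk' (fun g => (g.A, g.t ())) fun _ _ => rfl

lemma levi_comp_toLevi : (levi F V).comp (toLevi F V) = BlockGroup.delete Set.univ :=
  MonoidHom.ext fun _ => BlockGroup.ext rfl (funext fun _ => (if_pos trivial).symm) rfl

lemma toLinearEquiv_comp_levi_comp_inl :
    ((toLinearEquiv F V).comp (levi F V)).comp (MonoidHom.inl _ _) = stabilize F V := by
  refine MonoidHom.ext fun g => LinearEquiv.ext fun w => ?_
  ext <;> simp [levi]

end Parabolic

section LeviClasses

variable {k F V V' : Type*} [CommRing k] [Field F] [AddCommGroup V] [Module F V]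
  [AddCommGroup V'] [Module F V']

open Parabolic BlockGroup

/-- A class on the linear group of `V × F` whose restriction to the parabolic subgroup is pulled
back from the diagonal blocks vanishes. -/
def LeviClassesVanish (k F V : Type*) [CommRing k] [Field F] [AddCommGroup V] [Module F V] :
    Prop :=
  ∀ ⦃n : ℕ⦄ ⦃x : ReducedCohomology k ((V × F) ≃ₗ[F] (V × F)) n⦄,
    res (toLinearEquiv F V) x = res (delete Set.univ) (res (toLinearEquiv F V) x) → x = 0

lemma LeviClassesVanish.of_linearEquiv (h : LeviClassesVanish k F V') (e : V' ≃ₗ[F] V) :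
    LeviClassesVanish k F V := by
  intro n x hx
  let E : (V' × F) ≃ₗ[F] (V × F) := e.prodCongr (LinearEquiv.refl F F)
  have square : (conjugation E).comp (toLinearEquiv F V') = (toLinearEquiv F V).comp
      (mapLinear (conjugation e) e.toLinearMap (linearEquiv_smul e)) := by
    refine MonoidHom.ext fun g => LinearEquiv.ext fun w => ?_
    ext <;> simp [E, Units.smul_def]
  refine res_injective_of_comp_eq_id (conjugation_comp_symm E) ?_
  rw [map_zero]
  refine h ?_
  rw [res_res, square, ← res_res]
  exact res_mapLinear_eq_res_delete _ _ _ hx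

variable [Finite F]

lemma eq_zero_of_res_stabilize [Finite V] (hk : (Nat.card F : k) = 0) {n : ℕ}
    {x : ReducedCohomology k ((V × F) ≃ₗ[F] (V × F)) n}
    (hx : res (toLinearEquiv F V) x = res (delete Set.univ) (res (toLinearEquiv F V) x))
    (hstab : res (stabilize F V) x = 0) : x = 0 := by
  refine res_injective_of_isUnit_index toLinearEquiv_injective
    (isUnit_index_range_toLinearEquiv hk) ?_
  have res_levi : res ((toLinearEquiv F V).comp (levi F V)) x = 0 := by
    have ker_le : (MonoidHom.snd (V ≃ₗ[F] V) Fˣ).ker ≤ (MonoidHom.inl _ _).range :=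
      fun g hg => ⟨g.1, Prod.ext rfl (MonoidHom.mem_ker.1 hg).symm⟩
    refine res_injective_of_ker_le_range (fun _ _ h => congrArg Prod.fst h) ker_le
      (isUnit_card_units hk) ?_
    rw [map_zero, res_res, toLinearEquiv_comp_levi_comp_inl, hstab]
  rw [hx, ← levi_comp_toLevi, map_zero, res_res, ← MonoidHom.comp_assoc]
  exact res_comp_eq_zero res_levi _

lemma leviClassesVanish_of_subsingleton [Subsingleton V] (hk : (Nat.card F : k) = 0) :
    LeviClassesVanish k F V := by
  intro n x hx
  have : Subsingleton (V ≃ₗ[F] V) := DFunLike.coe_injective.subsingleton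
  exact eq_zero_of_res_stabilize hk hx (subsingleton_of_subsingleton.elim _ _)

lemma LeviClassesVanish.prod [Finite V] (hk : (Nat.card F : k) = 0)
    (h : LeviClassesVanish k F V) : LeviClassesVanish k F (V × F) := by
  intro n x hx
  refine eq_zero_of_res_stabilize hk hx (h ?_)
  have equivariant (g : V ≃ₗ[F] V) (v : V) :
      LinearMap.inl F V F (g • v) = stabilize F V g • LinearMap.inl F V F v := by ext <;> simp
  have swap_conj (g : Parabolic F (V ≃ₗ[F] V) V) :
      swapLast F V * (stabilize F (V × F)).comp (toLinearEquiv F V) g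
        = (toLinearEquiv F (V × F)).comp
          (mapLinear (stabilize F V) (LinearMap.inl F V F) equivariant) g * swapLast F V := by
    ext w <;> simp [Units.smul_def]
  have res_swap : res (toLinearEquiv F V) (res (stabilize F (V × F)) x)
      = res (mapLinear (stabilize F V) (LinearMap.inl F V F) equivariant)
          (res (toLinearEquiv F (V × F)) x) := by
    rw [res_res, res_res, res_eq_of_conj _ swap_conj]
  rw [res_swap]
  exact res_mapLinear_eq_res_delete _ _ _ hx

theorem leviClassesVanish [Finite V] (hk : (Nat.card F : k) = 0) : LeviClassesVanish k F V := by
  have : Module.Finite F V := Module.Finite.of_finite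
  have coordinates (n : ℕ) : LeviClassesVanish k F (Fin n → F) := by
    induction n with
    | zero => exact leviClassesVanish_of_subsingleton hk
    | succ n ih => exact (ih.prod hk).of_linearEquiv (LinearEquiv.ofFinrankEq _ _ (by simp))
  exact (coordinates _).of_linearEquiv (Module.finBasis F V).equivFun.symm

end LeviClasses

/-! ### Block matrices over a parabolic subgroup -/

namespace BlockGroup

variable {F Γ V κ τ κ' τ' : Type*} [Field F] {b : κ → τ} {b' : κ' → τ'} [Group Γ]
  [AddCommGroup V] [Module F V] [DistribMulAction Γ V] [SMulCommClass Γ F V]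

lemma delete_comp_delete (U U' : Set κ) :
    (delete U).comp (delete U') = delete (F := F) (Γ := Γ) (V := V) (b := b) (U ∪ U') := by
  refine MonoidHom.ext fun g => BlockGroup.ext rfl (funext fun c => ?_) rfl
  by_cases hc : c ∈ U <;> by_cases hc' : c ∈ U' <;> simp [hc, hc']

/-- The homomorphism of block groups given by a choice of columns, where `none` stands for the zero
column, and of scalars. -/
@[simps!]
def select (p : κ' → Option κ) (σ : τ' → τ) (hp : ∀ c c', p c' = some c → b c = σ (b' c')) :
    BlockGroup F Γ V b →* BlockGroup F Γ V b' :=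
  MonoidHom.mk' (fun g => ⟨g.A, fun c' => (p c').elim 0 g.X, fun β => g.t (σ β)⟩) fun g h => by
    refine BlockGroup.ext rfl (funext fun c' => ?_) rfl
    cases hc : p c' with
    | none => simp [hc]
    | some c => simp [hc, hp c c' hc]

end BlockGroup

section AffineGroup

variable {F V : Type*} [Field F] [AddCommGroup V] [Module F V]

variable (F V) in
/-- The scalar action of the units of `F` by automorphisms of the multiplicative copy of `V`. -/
def scalarAction : Fˣ →* MulAut (Multiplicative V) :=
  (MulAutMultiplicative V).symm.toMonoidHom.comp (DistribMulAction.toAddAut Fˣ V)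

@[simp] lemma scalarAction_apply (u : Fˣ) (v : Multiplicative V) :
    scalarAction F V u v = Multiplicative.ofAdd (u • v.toAdd) := rfl

variable (F V) in
/-- The group of the affine transformations `w ↦ u • w + v` of `V`. -/
abbrev AffineGroup := Multiplicative V ⋊[scalarAction F V] Fˣ

theorem AffineGroup.hom_eq_one {k M : Type*} [CommRing k] [AddCommGroup M] [Module k M]
    [Finite F] [Nontrivial Fˣ] (hk : (Nat.card F : k) = 0)
    (χ : AffineGroup F V →* Multiplicative M) : χ = 1 := by
  have hinr (u : Fˣ) : χ (SemidirectProduct.inr u) = 1 := by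
    let m : M := (χ (SemidirectProduct.inr u)).toAdd
    have torsion : (Nat.card Fˣ : k) • m = 0 := by
      rw [Nat.cast_smul_eq_nsmul, ← toAdd_pow, ← map_pow, ← map_pow, pow_card_eq_one', map_one,
        map_one, toAdd_one]
    exact Multiplicative.toAdd.injective ((isUnit_card_units hk).smul_eq_zero.1 torsion)
  have hinl (u : Fˣ) (v : V) : χ (SemidirectProduct.inl (.ofAdd (u • v)))
      = χ (SemidirectProduct.inl (.ofAdd v)) := by
    have conj := congrArg χ (SemidirectProduct.inl_aut (φ := scalarAction F V) u (.ofAdd v))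
    simpa [hinr] using conj
  obtain ⟨u, hu⟩ := exists_ne (1 : Fˣ)
  have hu' : (u : F) - 1 ≠ 0 := sub_ne_zero.2 fun h => hu (Units.ext h)
  refine SemidirectProduct.hom_ext (MonoidHom.ext fun v => ?_) (MonoidHom.ext hinr)
  let w : V := ((u : F) - 1)⁻¹ • v.toAdd
  have split : v = .ofAdd (u • w) / .ofAdd w := by
    refine Multiplicative.toAdd.injective ?_
    rw [toAdd_div, toAdd_ofAdd, toAdd_ofAdd, Units.smul_def, sub_eq_add_neg, ← neg_one_smul F w,
      ← add_smul, ← sub_eq_add_neg, smul_inv_smul₀ hu']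
  rw [split, MonoidHom.comp_apply, map_div, map_div, hinl, div_self', MonoidHom.comp_apply,
    MonoidHom.one_apply]

end AffineGroup

section RowSubgroups

variable (F V : Type*) {κ τ : Type*} [Field F] [AddCommGroup V] [Module F V] (b : κ → τ)

open BlockGroup

/-- The block group over the parabolic subgroup of `V × F`. The components of its columns in `F`
form one additional row. -/
abbrev BlockParabolic := BlockGroup F (Parabolic F (V ≃ₗ[F] V) V) (V × F) b

/-- The elements of the block parabolic group whose additional row is zero in the blocks of `Z` and
whose scalars with index in `E` agree with the scalar of the parabolic block. -/
def rowSubgroup (Z E : Finset τ) : Subgroup (BlockParabolic F V b) where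
  carrier := {g | (∀ c, b c ∈ Z → (g.X c).2 = 0) ∧ ∀ β ∈ E, g.t β = g.A.t ()}
  mul_mem' hg hh := ⟨fun c hc => by simp [hg.1 c hc, hh.1 c hc],
    fun β hβ => by simp [hg.2 β hβ, hh.2 β hβ]⟩
  one_mem' := ⟨fun _ _ => rfl, fun _ _ => rfl⟩
  inv_mem' hg := ⟨fun c hc => by simp [hg.1 c hc], fun β hβ => by simp [hg.2 β hβ]⟩

variable {F V b}

lemma rowSubgroup_mono {Z E Z' E' : Finset τ} (hZ : Z' ⊆ Z) (hE : E' ⊆ E) :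
    rowSubgroup F V b Z E ≤ rowSubgroup F V b Z' E' :=
  fun _ hg => ⟨fun c hc => hg.1 c (hZ hc), fun β hβ => hg.2 β (hE hβ)⟩

/-- The projection to the additional row and the scalars. -/
def rowPart : BlockParabolic F V b →* BlockParabolic F V b :=
  MonoidHom.mk' (fun g => ⟨⟨1, 0, g.A.t⟩, fun c => (0, (g.X c).2), g.t⟩) fun g h => by
    refine BlockGroup.ext (BlockGroup.ext (one_mul _).symm (by ext; simp) rfl)
      (funext fun c => ?_) rfl
    ext <;> simp

variable (F V b) in
/-- The deletion of a block of columns, and for `none` the projection to the additional row. -/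
noncomputable def blockProjection : Option τ → BlockParabolic F V b →* BlockParabolic F V b
  | none => rowPart
  | some β => delete (b ⁻¹' {β})

lemma blockProjection_mem {Z E : Finset τ} (i : Option τ) {g : BlockParabolic F V b}
    (hg : g ∈ rowSubgroup F V b Z E) : blockProjection F V b i g ∈ rowSubgroup F V b Z E := by
  cases i with
  | none => exact hg
  | some β =>
    refine ⟨fun c hc => ?_, hg.2⟩
    by_cases hβ : b c = β <;> simp [blockProjection, hβ, hg.1 c hc]

lemma blockProjection_comm (i j : Option τ) :
    (blockProjection F V b i).comp (blockProjection F V b j)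
      = (blockProjection F V b j).comp (blockProjection F V b i) := by
  have rowPart_comp_delete (U : Set κ) :
      (rowPart (F := F) (V := V) (b := b)).comp (delete U) = (delete U).comp rowPart := by
    refine MonoidHom.ext fun g => BlockGroup.ext rfl (funext fun c => ?_) rfl
    by_cases hc : c ∈ U <;> simp [rowPart, hc]
  cases i <;> cases j <;>
    simp only [blockProjection, rowPart_comp_delete, delete_comp_delete, Set.union_comm]

lemma blockProjection_idem (i : Option τ) :
    (blockProjection F V b i).comp (blockProjection F V b i) = blockProjection F V b i := by
  cases i with
  | none => rfl
  | some β => exact (delete_comp_delete _ _).trans (by rw [Set.union_self]; rfl)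

variable (F V b) in
/-- The restriction of the projections of the block parabolic group to its row subgroups. -/
noncomputable def rowProjection (Z E : Finset τ) (i : Option τ) :
    rowSubgroup F V b Z E →* rowSubgroup F V b Z E :=
  ((blockProjection F V b i).comp (Subgroup.subtype _)).codRestrict _
    fun g => blockProjection_mem i g.2

variable [DecidableEq τ]

/-- The identification of the indices in `E` with an additional index. -/
def mergeIndex (E : Finset τ) (β : τ) : Option τ := if β ∈ E then none else some β

/-- The blocks of one additional column and the columns of `b`, where the blocks in `E` are merged
with the one of the additional column. -/
def mergedBlock (b : κ → τ) (E : Finset τ) (c : Option κ) : Option τ :=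
  c.bind fun c => mergeIndex E (b c)

variable (F V b) in
/-- The elements of the block parabolic group with zero additional row which belong to the row
subgroups with index set `E`. The additional column is the one of the parabolic block. -/
abbrev MergedGroup (E : Finset τ) := BlockGroup F (V ≃ₗ[F] V) V (mergedBlock b E)

variable (F V b) in
/-- The subgroup of the merged group in which all the columns of the merged block are zero. -/
abbrev UnmergedGroup (E : Finset τ) :=
  BlockGroup F (V ≃ₗ[F] V) V fun c : {c // b c ∉ E} => some (b c)

variable (F V b) in
/-- The inclusion of the merged group into the block parabolic group. -/
@[simps!]
def mergedInclusion (E : Finset τ) : MergedGroup F V b E →* BlockParabolic F V b :=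
  MonoidHom.mk' (fun g => ⟨⟨g.A, fun _ => g.X none, fun _ => g.t none⟩,
    fun c => (g.X (some c), 0), fun β => g.t (mergeIndex E β)⟩) fun g h => by
      refine BlockGroup.ext (BlockGroup.ext rfl (funext fun _ => ?_) rfl) (funext fun c => ?_) rfl
      · simp [mergedBlock]
      · ext <;> simp [mergedBlock]

variable (F V b) in
/-- The inclusion of the merged group into a row subgroup. -/
def mergedToRow (Z E : Finset τ) : MergedGroup F V b E →* rowSubgroup F V b Z E :=
  (mergedInclusion F V b E).codRestrict _
    fun g => ⟨fun _ _ => rfl, fun β hβ => by simp [mergeIndex, hβ]⟩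

variable (F V b) in
/-- The inclusion of the unmerged group into the merged group. -/
@[simps!]
def unmergedInclusion (E : Finset τ) : UnmergedGroup F V b E →* MergedGroup F V b E :=
  select (fun c => c.bind fun c => if h : b c ∉ E then some ⟨c, h⟩ else none) id
    fun c c' h => by
      obtain _ | c' := c'
      · simp at h
      · by_cases hc : b c' ∈ E
        · simp [hc] at h
        · obtain rfl : ⟨c', hc⟩ = c := by simpa [hc] using h
          simp [mergedBlock, mergeIndex, hc]

variable (F V b) in
/-- The retraction of the merged group onto the unmerged group. -/
@[simps!]
def unmergedRetraction (E : Finset τ) : MergedGroup F V b E →* UnmergedGroup F V b E :=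
  select (fun c => some (some c.1)) id fun c c' h => by
    obtain rfl := Option.some_injective _ h
    simp [mergedBlock, mergeIndex, c'.2]

lemma unmergedInclusion_comp_retraction (E : Finset τ) :
    (unmergedInclusion F V b E).comp (unmergedRetraction F V b E)
      = delete (mergedBlock b E ⁻¹' {none}) := by
  refine MonoidHom.ext fun g => BlockGroup.ext rfl (funext fun c => ?_) rfl
  obtain _ | c := c
  · simp [mergedBlock]
  · by_cases hc : b c ∈ E <;> simp [mergedBlock, mergeIndex, hc]

variable (F V b) in
/-- The inclusion of the unmerged group into a row subgroup. -/
def unmergedToRow (Z E : Finset τ) : UnmergedGroup F V b E →* rowSubgroup F V b Z E :=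
  (mergedToRow F V b Z E).comp (unmergedInclusion F V b E)

@[simp] lemma coe_unmergedToRow (Z E : Finset τ) (g : UnmergedGroup F V b E) :
    (unmergedToRow F V b Z E g : BlockParabolic F V b)
      = mergedInclusion F V b E (unmergedInclusion F V b E g) := rfl

lemma mergedInclusion_comp_delete {E : Finset τ} {β : τ} (hβ : β ∉ E) :
    (mergedInclusion F V b E).comp (delete (mergedBlock b E ⁻¹' {some β}))
      = (delete (b ⁻¹' {β})).comp (mergedInclusion F V b E) := by
  refine MonoidHom.ext fun g => BlockGroup.ext (BlockGroup.ext rfl ?_ rfl) (funext fun c => ?_) rfl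
  · funext c
    simp [mergedBlock]
  · by_cases hc : b c = β
    · subst hc
      simp [mergedBlock, mergeIndex, hβ]
    · by_cases hE : b c ∈ E <;> simp [mergedBlock, mergeIndex, hc, hE]

lemma unmergedInclusion_comp_delete (E : Finset τ) (β : τ) :
    (unmergedInclusion F V b E).comp (delete ((fun c => some (b c.1)) ⁻¹' {some β}))
      = (delete (mergedBlock b E ⁻¹' {some β})).comp (unmergedInclusion F V b E) := by
  refine MonoidHom.ext fun g => BlockGroup.ext rfl (funext fun c => ?_) rfl
  obtain _ | c := c
  · simp [mergedBlock]
  · by_cases hE : b c ∈ E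
    · simp [mergedBlock, mergeIndex, hE]
    · by_cases hc : b c = β
      · subst hc
        simp [mergedBlock, mergeIndex, hE]
      · simp [mergedBlock, mergeIndex, hE, hc]

lemma mergedToRow_comp_delete (Z : Finset τ) {E : Finset τ} {β : τ} (hβ : β ∉ E) :
    (mergedToRow F V b Z E).comp (delete (mergedBlock b E ⁻¹' {some β}))
      = (rowProjection F V b Z E (some β)).comp (mergedToRow F V b Z E) :=
  MonoidHom.ext fun g => Subtype.ext (DFunLike.congr_fun (mergedInclusion_comp_delete hβ) g)

lemma unmergedToRow_comp_delete (Z : Finset τ) {E : Finset τ} {β : τ} (hβ : β ∉ E) :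
    (unmergedToRow F V b Z E).comp (delete ((fun c => some (b c.1)) ⁻¹' {some β}))
      = (rowProjection F V b Z E (some β)).comp (unmergedToRow F V b Z E) := by
  rw [unmergedToRow, MonoidHom.comp_assoc, unmergedInclusion_comp_delete, ← MonoidHom.comp_assoc,
    mergedToRow_comp_delete Z hβ, MonoidHom.comp_assoc]

end RowSubgroups

/-! ### Detection on row subgroups -/

open BlockGroup

/-- The deletions of the blocks detect the cohomology of the block groups over the linear group of
`V` in the degrees `n` such that `n + 2` is less than `m` plus the number of blocks. -/
def BlockDetection (k F V : Type*) [CommRing k] [Field F] [AddCommGroup V] [Module F V] (m : ℕ) :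
    Prop :=
  ∀ ⦃κ τ : Type⦄ [Finite κ] [Finite τ] (b : κ → τ) ⦃T : Finset τ⦄ (_ : ∀ c, b c ∈ T) ⦃n : ℕ⦄,
    n + 2 < T.card + m →
      Detects k (fun β : T => delete (F := F) (Γ := V ≃ₗ[F] V) (V := V) (b := b) (b ⁻¹' {β.1})) n

section RowDetection

variable {k F V : Type*} [CommRing k] [Field F] [AddCommGroup V] [Module F V] {κ τ : Type}
  {b : κ → τ} [DecidableEq τ] {m : ℕ} {T Z E : Finset τ}

/-- The analogue of `BlockDetection` for a row subgroup, where the row projections and the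
restriction to the unmerged group detect. -/
def RowDetection (k F V : Type*) [CommRing k] [Field F] [AddCommGroup V] [Module F V]
    (b : κ → τ) (m : ℕ) (T Z E : Finset τ) : Prop :=
  ∀ ⦃n : ℕ⦄, n + 2 < (T \ E).card + m + 1 →
    ∀ x : ReducedCohomology k (rowSubgroup F V b Z E) n,
      (∀ i ∈ (T \ E).insertNone, res (rowProjection F V b Z E i) x = 0) →
        res (unmergedToRow F V b Z E) x = 0 → x = 0

lemma BlockDetection.eq_res_delete [Finite κ] [Finite τ] (h : BlockDetection k F V m)
    (hT : ∀ c, b c ∈ T) {n : ℕ} (hn : n + 2 < (T \ E).card + m + 1)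
    {z : ReducedCohomology k (MergedGroup F V b E) n}
    (hz : ∀ β ∈ T \ E, res (delete (mergedBlock b E ⁻¹' {some β})) z = 0) :
    z = res (delete (mergedBlock b E ⁻¹' {none})) z := by
  have mem_insertNone (c : Option κ) : mergedBlock b E c ∈ (T \ E).insertNone := by
    obtain _ | c := c
    · simp [mergedBlock]
    · by_cases hc : b c ∈ E <;> simp [mergedBlock, mergeIndex, hc, hT c]
  refine sub_eq_zero.1 (h _ mem_insertNone (by rw [Finset.card_insertNone]; omega) _ ?_)
  rintro ⟨_ | β, hβ⟩
  · rw [map_sub, res_res, delete_comp_delete, Set.union_self, sub_self]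
  · rw [map_sub, res_res, delete_comp_delete, Set.union_comm, ← delete_comp_delete, ← res_res,
      hz β (Finset.some_mem_insertNone.1 hβ), map_zero, sub_zero]

lemma BlockDetection.detects_unmerged [Finite κ] [Finite τ] (h : BlockDetection k F V m)
    (hT : ∀ c, b c ∈ T) {n : ℕ} (hn : n + 2 < (T \ E).card + m)
    {x : ReducedCohomology k (rowSubgroup F V b Z E) n}
    (hx : ∀ β ∈ T \ E, res (rowProjection F V b Z E (some β)) x = 0) :
    res (unmergedToRow F V b Z E) x = 0 := by
  refine h (fun c : {c // b c ∉ E} => some (b c)) (T := (T \ E).map Function.Embedding.some)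
    (fun c => by simp [hT c.1, c.2]) (by rwa [Finset.card_map]) _ ?_
  rintro ⟨β, hβ⟩
  obtain ⟨β, hβT, rfl⟩ := Finset.mem_map.1 hβ
  refine (res_res ..).trans ?_
  exact (congrArg (res · x) (unmergedToRow_comp_delete Z (Finset.mem_sdiff.1 hβT).2)).trans
    (res_comp_eq_zero (hx β hβT) _)

variable (F V) in
/-- The identification of the row subgroup in which the additional row vanishes with the merged
group. -/
def rowToMerged (hZ : ∀ c, b c ∈ Z) (E : Finset τ) :
    rowSubgroup F V b Z E →* MergedGroup F V b E :=
  MonoidHom.mk' (fun g => ⟨g.1.A.A, fun c => c.elim (g.1.A.X ()) fun c => (g.1.X c).1,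
    fun β => β.elim (g.1.A.t ()) g.1.t⟩) fun g h => by
      refine BlockGroup.ext rfl (funext fun c => ?_) (funext fun β => by cases β <;> rfl)
      obtain _ | c := c
      · simp [mergedBlock]
      · by_cases hc : b c ∈ E <;>
          simp [mergedBlock, mergeIndex, hc, h.2.1 c (hZ c), h.2.2]

lemma mergedToRow_comp_rowToMerged (hZ : ∀ c, b c ∈ Z) (E : Finset τ) :
    (mergedToRow F V b Z E).comp (rowToMerged F V hZ E) = MonoidHom.id _ := by
  refine MonoidHom.ext fun g => Subtype.ext (BlockGroup.ext rfl (funext fun c => ?_)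
    (funext fun β => ?_))
  · exact Prod.ext rfl (g.2.1 c (hZ c)).symm
  · change (mergeIndex E β).elim (g.1.A.t ()) g.1.t = g.1.t β
    by_cases hβ : β ∈ E <;> simp [mergeIndex, hβ, g.2.2]

lemma BlockDetection.rowDetection_of_forall_mem [Finite κ] [Finite τ] (h : BlockDetection k F V m)
    (hT : ∀ c, b c ∈ T) (hZ : ∀ c, b c ∈ Z) : RowDetection k F V b m T Z E := by
  intro n hn x hx hunmerged
  refine res_injective_of_comp_eq_id (mergedToRow_comp_rowToMerged hZ E) ?_
  have delete_merged : res (delete (mergedBlock b E ⁻¹' {none})) (res (mergedToRow F V b Z E) x)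
      = 0 := by
    rw [res_res, ← unmergedInclusion_comp_retraction, ← MonoidHom.comp_assoc]
    exact res_comp_eq_zero hunmerged _
  rw [map_zero, ← delete_merged]
  refine h.eq_res_delete hT hn fun β hβ => ?_
  rw [res_res, mergedToRow_comp_delete Z (Finset.mem_sdiff.1 hβ).2]
  exact res_comp_eq_zero (hx _ (Finset.some_mem_insertNone.2 hβ)) _

end RowDetection

section RowExtension

variable {k F V : Type*} [CommRing k] [Field F] [AddCommGroup V] [Module F V] {κ τ : Type}
  {b : κ → τ} [DecidableEq τ] {m : ℕ} {T Z E : Finset τ} {β : τ}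

variable (F V b Z E β) in
/-- The action of the block `β` of the additional row and its scalars by affine transformations. -/
def rowToAffine : rowSubgroup F V b Z E →* AffineGroup F ({c // b c = β} → F) :=
  MonoidHom.mk' (fun g => ⟨.ofAdd fun c => (g.1.t β)⁻¹ • (g.1.X c).2,
    g.1.A.t () * (g.1.t β)⁻¹⟩) fun g h => by
      refine SemidirectProduct.ext (funext fun ⟨c, hc⟩ => ?_) ?_
      · change (g.1.t β * h.1.t β)⁻¹ • (g.1.A.t () • (h.1.X c).2 + h.1.t (b c) • (g.1.X c).2)
          = (g.1.t β)⁻¹ • (g.1.X c).2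
            + (g.1.A.t () * (g.1.t β)⁻¹) • (h.1.t β)⁻¹ • (h.1.X c).2
        rw [hc, smul_add, smul_smul, smul_smul, smul_smul, add_comm]
        congr 2
        · rw [mul_inv, mul_assoc, inv_mul_cancel, mul_one]
        · rw [mul_inv, mul_comm, mul_assoc]
      · rw [SemidirectProduct.mul_right, mul_mul_mul_comm, ← mul_inv]
        rfl

variable (F V b) in
/-- The element of a row subgroup which is concentrated in the block `β` of the additional row and
acts by a given affine transformation. -/
def affineLift (hZ : β ∉ Z) (hE : β ∉ E) (y : AffineGroup F ({c // b c = β} → F)) :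
    rowSubgroup F V b Z E :=
  ⟨⟨1, fun c => (0, if h : b c = β then y.right⁻¹ • y.left.toAdd ⟨c, h⟩ else 0),
    fun β' => if β' = β then y.right⁻¹ else 1⟩,
    fun c hc => by
      have : b c ≠ β := fun h => hZ (h ▸ hc)
      simp [this],
    fun β' hβ' => by
      have : β' ≠ β := fun h => hE (h ▸ hβ')
      simp [this]⟩

lemma rowToAffine_affineLift (hZ : β ∉ Z) (hE : β ∉ E)
    (y : AffineGroup F ({c // b c = β} → F)) :
    rowToAffine F V b Z E β (affineLift F V b hZ hE y) = y := by
  refine SemidirectProduct.ext (funext fun ⟨c, hc⟩ => ?_) ?_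
  · change ((affineLift F V b hZ hE y).1.t β)⁻¹ • ((affineLift F V b hZ hE y).1.X c).2
      = y.left.toAdd ⟨c, hc⟩
    simp [affineLift, hc]
  · simp [rowToAffine, affineLift]

variable (F V b) in
/-- The row subgroup in which the block `β` acts trivially, as a normal subgroup. -/
def rowExtension (hZ : β ∉ Z) (hE : β ∉ E) :
    GroupExtension (rowSubgroup F V b (insert β Z) (insert β E)) (rowSubgroup F V b Z E)
      (AffineGroup F ({c // b c = β} → F)) where
  inl := Subgroup.inclusion
    (rowSubgroup_mono (Finset.subset_insert β Z) (Finset.subset_insert β E))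
  rightHom := rowToAffine F V b Z E β
  inl_injective := Subgroup.inclusion_injective _
  range_inl_eq_ker_rightHom := by
    ext g
    refine ⟨?_, fun hg => ⟨⟨g.1, fun c hc => ?_, fun β' hβ' => ?_⟩, rfl⟩⟩
    · rintro ⟨h, rfl⟩
      refine SemidirectProduct.ext (funext fun ⟨c, hc⟩ => ?_) ?_
      · change (h.1.t β)⁻¹ • (h.1.X c).2 = 0
        rw [h.2.1 c (by simp [hc]), smul_zero]
      · exact (congrArg (_ * ·⁻¹) (h.2.2 β (by simp))).trans (mul_inv_cancel _)
    · obtain hc | hc := Finset.mem_insert.1 hc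
      · have left_eq : (g.1.t β)⁻¹ • (g.1.X c).2 = 0 :=
          congrFun (congrArg (fun y => y.left.toAdd) hg) ⟨c, hc⟩
        exact (smul_eq_zero_iff_eq _).1 left_eq
      · exact g.2.1 c hc
    · obtain rfl | hβ' := Finset.mem_insert.1 hβ'
      · exact (mul_inv_eq_one.1 (congrArg SemidirectProduct.right hg)).symm
      · exact g.2.2 β' hβ'
  rightHom_surjective y := ⟨_, rowToAffine_affineLift hZ hE y⟩

@[simp] lemma coe_rowExtension_inl (hZ : β ∉ Z) (hE : β ∉ E)
    (h : rowSubgroup F V b (insert β Z) (insert β E)) :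
    ((rowExtension F V b hZ hE).inl h : BlockParabolic F V b) = h := rfl

variable (F V b) in
/-- The row projections other than the deletion of the block `β`, as projections of the row
extension. -/
noncomputable def rowExtensionProjections (hZ : β ∉ Z) (hE : β ∉ E) {R : Finset τ} (hR : β ∉ R) :
    CommutingProjections (rowExtension F V b hZ hE) R.insertNone where
  total i := rowProjection F V b Z E i
  kernel i := rowProjection F V b (insert β Z) (insert β E) i
  inl_kernel _ _ := rfl
  rightHom_total := by
    rintro ⟨_ | β', hi⟩ g
    · rfl
    · refine SemidirectProduct.ext (funext fun ⟨c, hc⟩ => ?_) rfl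
      have hβ' : b c ≠ β' := fun h =>
        hR (by simpa [← hc, h] using hi)
      change (g.1.t β)⁻¹ • ((delete (b ⁻¹' {β'}) g.1).X c).2 = (g.1.t β)⁻¹ • (g.1.X c).2
      simp [hβ']
  kernel_idem i :=
    MonoidHom.ext fun g => Subtype.ext (DFunLike.congr_fun (blockProjection_idem i.1) g.1)
  kernel_comm i j :=
    MonoidHom.ext fun g => Subtype.ext (DFunLike.congr_fun (blockProjection_comm i.1 j.1) g.1)

lemma commute_affineLift (hZ : β ∉ Z) (hE : β ∉ E) (y : AffineGroup F ({c // b c = β} → F))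
    (g : UnmergedGroup F V b (insert β E)) :
    Commute (affineLift F V b hZ hE y) ((rowExtension F V b hZ hE).inl
      (unmergedToRow F V b (insert β Z) (insert β E) g)) := by
  refine Subtype.ext (BlockGroup.ext (BlockGroup.ext ?_ (funext fun _ => ?_) ?_)
    (funext fun c => ?_) ?_)
  · exact (one_mul _).trans (mul_one _).symm
  · simp [affineLift]
  · exact (one_mul _).trans (mul_one _).symm
  · by_cases hc : b c = β
    · ext <;> simp [affineLift, mergeIndex, hc]
    · have := Ne.symm hc
      ext <;> simp [affineLift, hc]
  · exact mul_comm _ _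

lemma RowDetection.of_insert [Finite κ] [Finite τ] [Finite F] [Nontrivial Fˣ]
    (hk : (Nat.card F : k) = 0) (h : BlockDetection k F V m)
    (hT : ∀ c, b c ∈ T) (hβ : β ∈ T) (hZ : β ∉ Z) (hE : β ∉ E)
    (hrow : RowDetection k F V b m T (insert β Z) E)
    (hkernel : RowDetection k F V b m T (insert β Z) (insert β E)) :
    RowDetection k F V b m T Z E := by
  rintro (_ | n) hn x hx hunmerged
  · exact subsingleton_degree_zero.elim _ _
  have card_sdiff : (T \ E).card = (T \ insert β E).card + 1 := by
    rw [Finset.sdiff_insert, Finset.card_erase_add_one (Finset.mem_sdiff.2 ⟨hβ, hE⟩)]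
  have sdiff_subset : T \ insert β E ⊆ T \ E :=
    Finset.sdiff_subset_sdiff subset_rfl (Finset.subset_insert β E)
  have restrict_row : res (Subgroup.inclusion (rowSubgroup_mono (F := F) (V := V) (b := b)
      (Finset.subset_insert β Z) subset_rfl)) x = 0 := by
    refine hrow hn _ (fun i hi => ?_) ?_
    · rw [res_res]
      exact res_comp_eq_zero (hx i hi) (Subgroup.inclusion (rowSubgroup_mono
        (Finset.subset_insert β Z) subset_rfl))
    · rw [res_res]
      exact hunmerged
  have : Nonempty (T \ insert β E).insertNone := ⟨⟨none, Finset.none_mem_insertNone⟩⟩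
  refine (rowExtensionProjections F V b hZ hE (R := T \ insert β E)
    (by simp)).eq_zero_of_res_inl_of_characters (fun c hc z hz => ?_)
    (unmergedToRow F V b (insert β Z) (insert β E)) (fun z hz => ?_)
    (fun y => ⟨_, rowToAffine_affineLift hZ hE y, commute_affineLift hZ hE y⟩)
    (AffineGroup.hom_eq_one hk) (fun i => hx i.1 (Finset.insertNone.monotone sdiff_subset i.2)) ?_
  · exact hkernel (by omega) z (fun i hi => hz ⟨i, hi⟩)
      (h.detects_unmerged hT (by omega) fun β' hβ' => hz ⟨_, Finset.some_mem_insertNone.2 hβ'⟩)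
  · exact hkernel (by omega) z fun i hi => hz ⟨i, hi⟩
  · exact res_comp_eq_zero restrict_row (Subgroup.inclusion
      (rowSubgroup_mono subset_rfl (Finset.subset_insert β E)))

theorem BlockDetection.rowDetection [Finite κ] [Finite τ] [Finite F] [Nontrivial Fˣ]
    (hk : (Nat.card F : k) = 0) (h : BlockDetection k F V m) (hT : ∀ c, b c ∈ T)
    (hEZ : E ⊆ Z) : RowDetection k F V b m T Z E := by
  induction hR : T \ Z using Finset.strongInduction generalizing Z E with
  | H R ih =>
    obtain hTZ | ⟨β, hβ⟩ := (T \ Z).eq_empty_or_nonempty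
    · exact h.rowDetection_of_forall_mem hT fun c => Finset.sdiff_eq_empty_iff_subset.1 hTZ (hT c)
    obtain ⟨hβT, hβZ⟩ := Finset.mem_sdiff.1 hβ
    have ssubset : T \ insert β Z ⊂ R := by
      rw [← hR, Finset.sdiff_insert]
      exact Finset.erase_ssubset hβ
    exact .of_insert hk h hT hβT hβZ (fun hE => hβZ (hEZ hE))
      (ih _ ssubset (hEZ.trans (Finset.subset_insert β Z)) rfl)
      (ih _ ssubset (Finset.insert_subset_insert β hEZ) rfl)

end RowExtension

/-! ### Raising the dimension by one -/

open Parabolic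

section RestrictionToParabolic

variable {k F V : Type*} [CommRing k] [Field F] [AddCommGroup V] [Module F V] {κ τ : Type}
  {b : κ → τ}

variable (F V b) in
/-- The inclusion of the block parabolic group into the block group over the linear group of
`V × F`. -/
@[simps!]
def parabolicInclusion :
    BlockParabolic F V b →* BlockGroup F ((V × F) ≃ₗ[F] (V × F)) (V × F) b :=
  mapLinear (toLinearEquiv F V) LinearMap.id fun _ _ => rfl

lemma parabolicInclusion_comp_delete (U : Set κ) :
    (parabolicInclusion F V b).comp (delete U) = (delete U).comp (parabolicInclusion F V b) :=
  mapLinear_comp_delete _ _ _ U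

lemma res_parabolicInclusion_injective [Finite F] [Finite V] (hk : (Nat.card F : k) = 0) {n : ℕ} :
    Function.Injective (res (k := k) (n := n) (parabolicInclusion F V b)) := by
  have injective : Function.Injective (parabolicInclusion F V b) := fun g h eq =>
    BlockGroup.ext (toLinearEquiv_injective (congrArg BlockGroup.A eq))
      (congrArg BlockGroup.X eq :) (congrArg BlockGroup.t eq :)
  have index_eq : (parabolicInclusion F V b).range.index = (toLinearEquiv F V).range.index :=
    index_range_mapLinear_id _ _
  have : (parabolicInclusion F V b).range.FiniteIndex :=
    ⟨index_eq ▸ Subgroup.FiniteIndex.index_ne_zero⟩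
  refine res_injective_of_isUnit_index injective ?_
  rw [index_eq]
  exact isUnit_index_range_toLinearEquiv hk

end RestrictionToParabolic

lemma eq_res_delete_of_forall_mem {k F Γ V κ τ : Type*} [CommRing k] [Field F] [Group Γ]
    [AddCommGroup V] [Module F V] [DistribMulAction Γ V] [SMulCommClass Γ F V] {b : κ → τ} {n : ℕ}
    {y : ReducedCohomology k (BlockGroup F Γ V b) n} {U : Set κ} (hU : U.Finite)
    (hy : ∀ c ∈ U, y = res (delete {c}) y) : y = res (delete U) y := by
  induction U, hU using Set.Finite.induction_on with
  | empty =>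
    have delete_empty : delete ∅ = MonoidHom.id (BlockGroup F Γ V b) :=
      MonoidHom.ext fun g => BlockGroup.ext rfl (funext fun c => by simp) rfl
    rw [delete_empty, res_id]
  | @insert c U _ _ ih =>
    rw [Set.insert_eq, ← delete_comp_delete, ← res_res, ← hy c (Set.mem_insert c U)]
    exact ih fun c' hc' => hy c' (Set.mem_insert_of_mem c hc')

section Unmerged

variable {k F V : Type*} [CommRing k] [Field F] [AddCommGroup V] [Module F V] {κ τ : Type}
  {b : κ → τ}

variable (F V b) in
/-- The inclusion of the block group over the linear group of `V` into the unmerged group, where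
the additional scalar is the one of the block `β`. -/
def repeatScalar [DecidableEq τ] (β : τ) :
    BlockGroup F (V ≃ₗ[F] V) V b →* UnmergedGroup F V b ∅ :=
  select (fun c => some c.1) (fun o => o.getD β) fun c c' h => by
    obtain rfl := Option.some_injective _ h
    rfl

variable (F V b) in
/-- The inclusion of the block group over the linear group of `V` into the merged group, where
the additional column is a copy of the column `c`. -/
def repeatColumn [DecidableEq τ] (c : κ) :
    BlockGroup F (V ≃ₗ[F] V) V b →* MergedGroup F V b ∅ :=
  select (fun c' => some (c'.getD c)) (fun o => o.getD (b c)) fun c₁ c' h => by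
    obtain rfl := Option.some_injective _ h
    cases c' <;> rfl

variable [DecidableEq τ]

lemma res_repeatScalar_injective [Finite F] (hk : (Nat.card F : k) = 0) (β : τ) {n : ℕ} :
    Function.Injective (res (k := k) (n := n) (repeatScalar F V b β)) := by
  let χ : UnmergedGroup F V b ∅ →* Fˣ :=
    MonoidHom.mk' (fun g => g.t none * (g.t (some β))⁻¹) fun g h => by
      rw [mul_t, Pi.mul_apply, Pi.mul_apply, mul_inv, mul_mul_mul_comm]
  refine res_injective_of_ker_le_range (χ := χ) (fun g h eq => ?_) (fun g hg => ?_)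
    (isUnit_card_units hk)
  · exact BlockGroup.ext (congrArg BlockGroup.A eq :)
      (funext fun c => congrFun (congrArg BlockGroup.X eq) ⟨c, Finset.notMem_empty _⟩)
      (funext fun β' => congrFun (congrArg BlockGroup.t eq) (some β'))
  · refine ⟨⟨g.A, fun c => g.X ⟨c, Finset.notMem_empty _⟩, fun β' => g.t (some β')⟩,
      BlockGroup.ext rfl rfl (funext fun o => ?_)⟩
    cases o with
    | none => exact (mul_inv_eq_one.1 hg).symm
    | some β' => rfl

lemma delete_comp_repeatColumn (c : κ) :
    (delete (mergedBlock b ∅ ⁻¹' {none})).comp (repeatColumn F V b c)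
      = (unmergedInclusion F V b ∅).comp (repeatScalar F V b (b c)) := by
  refine MonoidHom.ext fun g => BlockGroup.ext rfl (funext fun c' => ?_) rfl
  cases c' <;> simp [repeatColumn, repeatScalar, mergedBlock, mergeIndex]

lemma delete_comp_repeatScalar (β : τ) (c : κ) :
    (delete {some c}).comp ((unmergedInclusion F V b ∅).comp (repeatScalar F V b β))
      = ((unmergedInclusion F V b ∅).comp (repeatScalar F V b β)).comp (delete {c}) := by
  refine MonoidHom.ext fun g => BlockGroup.ext rfl (funext fun c' => ?_) rfl
  cases c' with
  | none => simp [repeatScalar]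
  | some c' => by_cases hc : c' = c <;> simp [repeatScalar, hc]

/- The elementary matrix with entry `-1` in the additional row and the column `c` subtracts the
additional column from the column `c`. -/
lemma conj_repeatColumn [DecidableEq κ] (c : κ) (g : BlockGroup F (V ≃ₗ[F] V) V b) :
    (⟨1, Pi.single c (0, -1), 1⟩ : BlockParabolic F V b)
        * ((mergedInclusion F V b ∅).comp (delete {some c})).comp (repeatColumn F V b c) g
      = (mergedInclusion F V b ∅).comp (repeatColumn F V b c) g * ⟨1, Pi.single c (0, -1), 1⟩ := by
  have A_eq : (((mergedInclusion F V b ∅).comp (delete {some c})).comp (repeatColumn F V b c) g).A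
      = ((mergedInclusion F V b ∅).comp (repeatColumn F V b c) g).A :=
    BlockGroup.ext rfl (funext fun _ => by simp) rfl
  refine BlockGroup.ext ((one_mul _).trans (A_eq.trans (mul_one _).symm)) (funext fun c' => ?_)
    (mul_comm _ _)
  by_cases hc : c' = c
  · subst hc
    ext <;> simp [repeatColumn, mergeIndex]
  · ext <;> simp [repeatColumn, mergeIndex, hc]

lemma res_repeatScalar_eq_res_delete {n : ℕ} {x : ReducedCohomology k (BlockParabolic F V b) n}
    {z : ReducedCohomology k (MergedGroup F V b ∅) n} (hzx : z = res (mergedInclusion F V b ∅) x)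
    (hz : z = res (delete (mergedBlock b ∅ ⁻¹' {none})) z) (c : κ) :
    res ((unmergedInclusion F V b ∅).comp (repeatScalar F V b (b c))) z
      = res (delete {c})
        (res ((unmergedInclusion F V b ∅).comp (repeatScalar F V b (b c))) z) := by
  classical
  have res_repeatColumn : res ((delete {some c}).comp (repeatColumn F V b c)) z
      = res (repeatColumn F V b c) z := by
    rw [hzx, res_res, res_res, ← MonoidHom.comp_assoc]
    exact res_eq_of_conj _ (conj_repeatColumn c) x
  calc res ((unmergedInclusion F V b ∅).comp (repeatScalar F V b (b c))) z
      = res (repeatColumn F V b c) z := by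
        rw [← delete_comp_repeatColumn, ← res_res, ← hz]
    _ = res ((delete {some c}).comp (repeatColumn F V b c)) z := res_repeatColumn.symm
    _ = res ((delete {some c}).comp (repeatColumn F V b c))
          (res (delete (mergedBlock b ∅ ⁻¹' {none})) z) := by rw [← hz]
    _ = res ((delete {some c}).comp
          ((delete (mergedBlock b ∅ ⁻¹' {none})).comp (repeatColumn F V b c))) z := by
        rw [res_res, ← MonoidHom.comp_assoc, ← MonoidHom.comp_assoc, delete_comp_delete,
          delete_comp_delete, Set.union_comm]
    _ = _ := by
        rw [delete_comp_repeatColumn, delete_comp_repeatScalar, res_res]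

lemma res_unmergedInclusion_eq_zero_of_eq_res_delete [Finite κ] [Finite F]
    (hk : (Nat.card F : k) = 0) (β : τ) {n : ℕ} {x : ReducedCohomology k (BlockParabolic F V b) n}
    (hx : res (delete (b ⁻¹' {β})) x = 0)
    (hz : res (mergedInclusion F V b ∅) x
      = res (delete (mergedBlock b ∅ ⁻¹' {none})) (res (mergedInclusion F V b ∅) x)) :
    res (unmergedInclusion F V b ∅) (res (mergedInclusion F V b ∅) x) = 0 := by
  refine res_repeatScalar_injective hk β ?_
  have eq_delete := eq_res_delete_of_forall_mem (Set.toFinite (b ⁻¹' {β})) fun c hc =>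
    Set.mem_preimage.1 hc ▸ res_repeatScalar_eq_res_delete (b := b) rfl hz c
  rw [map_zero, res_res, eq_delete]
  have square : ((mergedInclusion F V b ∅).comp
      ((unmergedInclusion F V b ∅).comp (repeatScalar F V b β))).comp (delete (b ⁻¹' {β}))
      = (delete (b ⁻¹' {β})).comp ((mergedInclusion F V b ∅).comp
        ((unmergedInclusion F V b ∅).comp (repeatScalar F V b β))) := by
    refine MonoidHom.ext fun g => BlockGroup.ext rfl (funext fun c => ?_) rfl
    by_cases hc : b c = β <;> simp [repeatScalar, hc]
  rw [res_res, res_res, ← MonoidHom.comp_assoc, square]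
  exact res_comp_eq_zero hx _

variable [Finite κ] [Finite τ] [Finite F] {m n : ℕ} {T : Finset τ}
  {x : ReducedCohomology k (BlockParabolic F V b) n}

lemma BlockDetection.res_unmergedInclusion_eq_zero (hk : (Nat.card F : k) = 0)
    (h : BlockDetection k F V m) (hT : ∀ c, b c ∈ T) (hne : T.Nonempty)
    (hn : n + 2 < T.card + m + 1) (hx : ∀ β ∈ T, res (delete (b ⁻¹' {β})) x = 0) :
    res (unmergedInclusion F V b ∅) (res (mergedInclusion F V b ∅) x) = 0 := by
  obtain ⟨β, hβ⟩ := hne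
  refine res_unmergedInclusion_eq_zero_of_eq_res_delete hk β (hx β hβ) ?_
  refine h.eq_res_delete hT (by rwa [Finset.sdiff_empty]) fun β hβ => ?_
  rw [res_res, mergedInclusion_comp_delete (Finset.notMem_empty β)]
  exact res_comp_eq_zero (hx β (Finset.mem_sdiff.1 hβ).1) _

omit [DecidableEq τ] in
lemma BlockDetection.eq_zero_of_res_rowPart [Nontrivial Fˣ] (hk : (Nat.card F : k) = 0)
    (h : BlockDetection k F V m) (hT : ∀ c, b c ∈ T) (hne : T.Nonempty)
    (hn : n + 2 < T.card + m + 1) (hx : ∀ β ∈ T, res (delete (b ⁻¹' {β})) x = 0)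
    (hrow : res rowPart x = 0) : x = 0 := by
  classical
  let toRow : BlockParabolic F V b →* rowSubgroup F V b ∅ ∅ :=
    (MonoidHom.id _).codRestrict _ fun g =>
      ⟨fun _ hc => absurd hc (Finset.notMem_empty _), fun _ hβ => absurd hβ (Finset.notMem_empty _)⟩
  have subtype_comp_toRow : (Subgroup.subtype _).comp toRow = MonoidHom.id _ := rfl
  refine res_injective_of_comp_eq_id subtype_comp_toRow ?_
  rw [map_zero]
  refine h.rowDetection hk hT subset_rfl (by rwa [Finset.sdiff_empty]) _ (fun i hi => ?_) ?_
  · rw [res_res]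
    refine res_comp_eq_zero (φ := blockProjection F V b i) ?_ (Subgroup.subtype _)
    cases i with
    | none => exact hrow
    | some β => exact hx β (Finset.mem_sdiff.1 (Finset.some_mem_insertNone.1 hi)).1
  · have unmerged_eq := h.res_unmergedInclusion_eq_zero hk hT hne hn hx
    rw [res_res] at unmerged_eq
    rw [res_res]
    exact unmerged_eq

end Unmerged

section DetectionStep

variable {k F U : Type*} [CommRing k] [Field F] [AddCommGroup U] [Module F U] {κ τ : Type}
  {b : κ → τ} [DecidableEq τ] {m n : ℕ}

variable (F U b) in
/-- The additional row and the scalars as an element of the unmerged group, in which the last row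
of `U × F` plays the role of the additional row. -/
def rowToUnmerged : BlockParabolic F (U × F) b →* UnmergedGroup F (U × F) b ∅ :=
  MonoidHom.mk' (fun g => ⟨toLinearEquiv F U ⟨1, 0, g.A.t⟩, fun c => (0, (g.X c).2),
    fun o => o.elim 1 g.t⟩) fun g h => by
      refine BlockGroup.ext (LinearEquiv.ext fun w => ?_) (funext fun c => ?_) (funext fun o => ?_)
      · ext <;> simp [mul_smul]
      · ext <;> simp
      · cases o <;> simp

lemma conj_rowToUnmerged (g : BlockParabolic F (U × F) b) :
    (⟨swapLast F U, 0, 1⟩ : BlockGroup F (((U × F) × F) ≃ₗ[F] ((U × F) × F)) ((U × F) × F) b)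
        * ((parabolicInclusion F (U × F) b).comp ((mergedInclusion F (U × F) b ∅).comp
          (unmergedInclusion F (U × F) b ∅))).comp (rowToUnmerged F U b) g
      = (parabolicInclusion F (U × F) b).comp rowPart g * ⟨swapLast F U, 0, 1⟩ := by
  refine BlockGroup.ext (LinearEquiv.ext fun w => ?_) (funext fun c => ?_) (mul_comm _ _)
  · ext <;> simp [rowToUnmerged, rowPart]
  · ext <;> simp [rowToUnmerged, rowPart]

lemma res_rowPart_eq_zero
    {y : ReducedCohomology k
      (BlockGroup F (((U × F) × F) ≃ₗ[F] ((U × F) × F)) ((U × F) × F) b) n}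
    (hy : res (unmergedInclusion F (U × F) b ∅) (res (mergedInclusion F (U × F) b ∅)
      (res (parabolicInclusion F (U × F) b) y)) = 0) :
    res rowPart (res (parabolicInclusion F (U × F) b) y) = 0 := by
  rw [res_res, ← res_eq_of_conj _ conj_rowToUnmerged]
  refine res_comp_eq_zero ?_ _
  rwa [res_res, res_res] at hy

omit [DecidableEq τ] in
theorem BlockDetection.detects_delete_block_prod [Finite F] [Finite U] [Nontrivial Fˣ] [Finite κ]
    [Finite τ] (hk : (Nat.card F : k) = 0) (h : BlockDetection k F (U × F) m) {T : Finset τ}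
    (hT : ∀ c, b c ∈ T) (hne : T.Nonempty) (hn : n + 2 < T.card + m + 1) :
    Detects k (fun β : T => delete (F := F) (V := (U × F) × F) (b := b)
      (Γ := ((U × F) × F) ≃ₗ[F] ((U × F) × F)) (b ⁻¹' {β.1})) n := by
  classical
  intro y hy
  refine res_parabolicInclusion_injective hk ?_
  rw [map_zero]
  have hx (β : τ) (hβ : β ∈ T) :
      res (delete (b ⁻¹' {β})) (res (parabolicInclusion F (U × F) b) y) = 0 := by
    rw [res_res, parabolicInclusion_comp_delete]
    exact res_comp_eq_zero (hy ⟨β, hβ⟩) _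
  exact h.eq_zero_of_res_rowPart hk hT hne hn hx
    (res_rowPart_eq_zero (h.res_unmergedInclusion_eq_zero hk hT hne hn hx))

end DetectionStep

/-! ### Vanishing of the reduced cohomology of linear groups -/

section Transport

variable {k F V V' : Type*} [CommRing k] [Field F] [AddCommGroup V] [Module F V]
  [AddCommGroup V'] [Module F V']

lemma Detects.of_linearEquiv {κ τ : Type*} {b : κ → τ} (e : V' ≃ₗ[F] V) {T : Finset τ} {n : ℕ}
    (h : Detects k (fun β : T => delete (F := F) (Γ := V' ≃ₗ[F] V') (V := V') (b := b)
      (b ⁻¹' {β.1})) n) :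
    Detects k (fun β : T => delete (F := F) (Γ := V ≃ₗ[F] V) (V := V) (b := b)
      (b ⁻¹' {β.1})) n := by
  intro x hx
  have comp_symm : (mapLinear (b := b) (conjugation e) e.toLinearMap (linearEquiv_smul e)).comp
      (mapLinear (conjugation e.symm) e.symm.toLinearMap (linearEquiv_smul e.symm))
      = MonoidHom.id _ := by
    refine MonoidHom.ext fun g => BlockGroup.ext ?_ (funext fun c => by simp) rfl
    exact DFunLike.congr_fun (conjugation_comp_symm e) g.A
  refine res_injective_of_comp_eq_id comp_symm ?_
  rw [map_zero]
  refine h _ fun β => ?_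
  rw [res_res, mapLinear_comp_delete]
  exact res_comp_eq_zero (hx β) _

lemma BlockDetection.of_linearEquiv {m : ℕ} (h : BlockDetection k F V' m) (e : V' ≃ₗ[F] V) :
    BlockDetection k F V m :=
  fun _ _ _ _ b _ hT _ hn => Detects.of_linearEquiv e (h b hT hn)

end Transport

section Vanishing

variable {k F V : Type*} [CommRing k] [Field F] [Finite F] [AddCommGroup V] [Module F V]

lemma BlockDetection.subsingleton_linearEquiv_prod [Finite V] (hk : (Nat.card F : k) = 0) {m n : ℕ}
    (h : BlockDetection k F V m) (hn : n + 2 < m + 1) :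
    Subsingleton (ReducedCohomology k ((V × F) ≃ₗ[F] (V × F)) n) := by
  refine subsingleton_of_forall_eq 0 fun x => leviClassesVanish hk ?_
  rw [← sub_eq_zero]
  refine h (id : Unit → Unit) (T := {()}) (n := n) (fun _ => Finset.mem_singleton_self _)
    (by rw [Finset.card_singleton]; omega) _ fun β => ?_
  have preimage_eq : (id : Unit → Unit) ⁻¹' {β.1} = Set.univ := by ext; simp
  dsimp only
  rw [map_sub, preimage_eq, res_res (delete Set.univ) (delete Set.univ), delete_comp_delete,
    Set.union_self, sub_self]

lemma subsingleton_blockGroup_of_isEmpty (hk : (Nat.card F : k) = 0) {κ τ : Type*} [IsEmpty κ]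
    [Finite τ] (b : κ → τ) {n : ℕ} [Subsingleton (ReducedCohomology k (V ≃ₗ[F] V) n)] :
    Subsingleton (ReducedCohomology k (BlockGroup F (V ≃ₗ[F] V) V b) n) := by
  have := Fintype.ofFinite τ
  let diagonal : (V ≃ₗ[F] V) →* BlockGroup F (V ≃ₗ[F] V) V b :=
    MonoidHom.mk' (fun A => ⟨A, 0, 1⟩) fun _ _ =>
      BlockGroup.ext rfl (Subsingleton.elim _ _) (mul_one 1).symm
  let scalars : BlockGroup F (V ≃ₗ[F] V) V b →* (τ → Fˣ) :=
    MonoidHom.mk' BlockGroup.t fun _ _ => rfl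
  have ker_le : scalars.ker ≤ diagonal.range := fun g hg =>
    ⟨g.A, BlockGroup.ext rfl (Subsingleton.elim _ _) (MonoidHom.mem_ker.1 hg).symm⟩
  have isUnit_card : IsUnit (Nat.card (τ → Fˣ) : k) := by
    rw [Nat.card_fun, Nat.cast_pow]
    exact (isUnit_card_units hk).pow _
  exact (res_injective_of_ker_le_range (fun _ _ h => congrArg BlockGroup.A h) ker_le
    isUnit_card).subsingleton

lemma BlockDetection.subsingleton_linearEquiv_pi (hk : (Nat.card F : k) = 0) {j m n : ℕ}
    (h : BlockDetection k F (Fin j → F) m) (hn : n + 2 < m + 1) :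
    Subsingleton (ReducedCohomology k ((Fin (j + 1) → F) ≃ₗ[F] (Fin (j + 1) → F)) n) := by
  have e : ((Fin j → F) × F) ≃ₗ[F] (Fin (j + 1) → F) := LinearEquiv.ofFinrankEq _ _ (by simp)
  have := h.subsingleton_linearEquiv_prod hk hn
  exact (res_injective_of_comp_eq_id (conjugation_comp_symm e)).subsingleton

end Vanishing

section Induction

variable {k F : Type*} [CommRing k] [Field F] [Finite F]

lemma blockDetection_of_subsingleton (hk : (Nat.card F : k) = 0) {V : Type*} [AddCommGroup V]
    [Module F V] [Subsingleton V] (m : ℕ) : BlockDetection k F V m := by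
  intro κ τ _ _ b T hT n hn x hx
  rcases T.eq_empty_or_nonempty with rfl | ⟨β, hβ⟩
  · have : IsEmpty κ := ⟨fun c => Finset.notMem_empty _ (hT c)⟩
    have : Subsingleton (V ≃ₗ[F] V) := DFunLike.coe_injective.subsingleton
    have : Subsingleton (ReducedCohomology k (V ≃ₗ[F] V) n) := subsingleton_of_subsingleton
    exact (subsingleton_blockGroup_of_isEmpty hk b).elim _ _
  · have delete_eq : delete (F := F) (Γ := V ≃ₗ[F] V) (V := V) (b := b) (b ⁻¹' {β})
        = MonoidHom.id _ :=
      MonoidHom.ext fun g => BlockGroup.ext rfl (Subsingleton.elim _ _) rfl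
    rw [← res_id x, ← delete_eq]
    exact hx ⟨β, hβ⟩

variable {ι : Type*} [Fintype ι] [Nonempty ι] {v : ι → F}

theorem ZeroSumFree.blockDetection [Nontrivial Fˣ] (hk : (Nat.card F : k) = 0) (hv : ZeroSumFree v)
    (j : ℕ) : BlockDetection k F (Fin j → F) (j + Fintype.card ι) := by
  induction j with
  | zero => exact blockDetection_of_subsingleton hk _
  | succ j ih =>
    intro κ τ _ _ b T hT n hn
    rcases T.eq_empty_or_nonempty with rfl | hne
    · intro x _
      have : IsEmpty κ := ⟨fun c => Finset.notMem_empty _ (hT c)⟩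
      rw [Finset.card_empty, zero_add, Nat.add_right_comm] at hn
      have := ih.subsingleton_linearEquiv_pi hk hn
      exact (subsingleton_blockGroup_of_isEmpty hk b).elim _ _
    · cases j with
      | zero => exact detects_delete_block hv hT hne (by omega)
      | succ j =>
        have split : ((Fin j → F) × F) ≃ₗ[F] (Fin (j + 1) → F) :=
          LinearEquiv.ofFinrankEq _ _ (by simp)
        have split' : (((Fin j → F) × F) × F) ≃ₗ[F] (Fin (j + 2) → F) :=
          LinearEquiv.ofFinrankEq _ _ (by simp)
        refine Detects.of_linearEquiv split' ?_
        exact (ih.of_linearEquiv split.symm).detects_delete_block_prod hk hT hne (by omega)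

theorem ZeroSumFree.subsingleton_linearEquiv_pi [Nontrivial Fˣ] (hk : (Nat.card F : k) = 0)
    (hv : ZeroSumFree v) {j n : ℕ} (hn : n + 2 < j + Fintype.card ι) :
    Subsingleton (ReducedCohomology k ((Fin j → F) ≃ₗ[F] (Fin j → F)) n) := by
  cases j with
  | zero =>
    have : Subsingleton ((Fin 0 → F) ≃ₗ[F] (Fin 0 → F)) := DFunLike.coe_injective.subsingleton
    exact subsingleton_of_subsingleton
  | succ j => exact (hv.blockDetection hk j).subsingleton_linearEquiv_pi hk (by omega)

end Induction

/-! ### Homology of the bar complex -/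

open GroupHomologyBar

section Duality

section Pairing

variable {k G : Type} [CommRing k] [Group G] {n : ℕ}

/-- Evaluation of homogeneous cochains on inhomogeneous chains: the bar simplex `[g₁|…|gₙ]` has the
vertices `1, g₁, g₁g₂, …`. -/
noncomputable def pairing (f : (Fin (n + 1) → G) → k) : chains G k n →ₗ[k] k :=
  Finsupp.linearCombination k fun g => f (Fin.partialProd g)

lemma pairing_single (f : (Fin (n + 1) → G) → k) (g : Fin n → G) (a : k) :
    pairing f (Finsupp.single g a) = a * f (Fin.partialProd g) :=
  Finsupp.linearCombination_single k a g

lemma d_smul (a : k) (y : chains G k (n + 1)) : d G k n (a • y) = a • d G k n y := by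
  induction y using Finsupp.induction_linear with
  | zero => simp
  | add y z hy hz => rw [smul_add, map_add, map_add, smul_add, hy, hz]
  | single g c =>
    simp only [Finsupp.smul_single, d_single, smul_add, Finset.smul_sum, smul_comm a]

lemma coboundary_partialProd {f : (Fin (n + 1) → G) → k} (hf : f ∈ invariantCochains k G (n + 1))
    (g : Fin (n + 1) → G) :
    coboundary k (n + 1) f (Fin.partialProd g) = f (Fin.partialProd (Fin.tail g))
      + ∑ j : Fin (n + 1),
          ((-1 : ℤ) ^ ((j : ℕ) + 1)) • f (Fin.partialProd (Fin.contractNth j (· * ·) g)) := by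
  have face_zero : Fin.tail (Fin.partialProd g)
      = fun i => g 0 * Fin.partialProd (Fin.tail g) i := funext (Fin.partialProd_succ' g)
  rw [coboundary_apply, Fin.sum_univ_succ, Fin.removeNth_zero, face_zero, hf]
  simp only [Fin.partialProd_contractNth, Fin.val_zero, Fin.val_succ, pow_zero, one_mul,
    smul_eq_mul, zsmul_eq_mul, Int.cast_pow, Int.cast_neg, Int.cast_one]
  rfl

lemma pairing_d {f : (Fin (n + 1) → G) → k} (hf : f ∈ invariantCochains k G (n + 1))
    (y : chains G k (n + 1)) : pairing f (d G k n y) = pairing (coboundary k (n + 1) f) y := by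
  induction y using Finsupp.induction_linear with
  | zero => simp
  | add y z hy hz => simp only [map_add, hy, hz]
  | single g a =>
    simp only [d_single, map_add, map_sum, map_zsmul, pairing_single, coboundary_partialProd hf,
      mul_add, Finset.mul_sum, mul_smul_comm]

lemma coboundary_mem_invariantCochains {f : (Fin n → G) → k} (hf : f ∈ invariantCochains k G n) :
    coboundary k n f ∈ invariantCochains k G (n + 1) := fun g x =>
  (coboundary_comp k (g * ·) n f x).trans (congrArg (coboundary k n · x) (funext (hf g)))

lemma eq_zero_of_pairing_eq_zero {f : (Fin (n + 1) → G) → k}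
    (hf : f ∈ invariantCochains k G (n + 1)) (h : pairing f = 0) : f = 0 := by
  funext x
  let g : Fin n → G := fun i => (x i.castSucc)⁻¹ * x i.succ
  have translate : (fun i => x 0 * Fin.partialProd g i) = x := Fin.partialProd_left_inv x
  rw [← translate, hf, ← one_mul (f _), ← pairing_single, h]
  rfl

lemma exists_pairing_eq (φ : chains G k n →ₗ[k] k) :
    ∃ f ∈ invariantCochains k G (n + 1), pairing f = φ := by
  refine ⟨fun x => φ (Finsupp.single (fun i => (x i.castSucc)⁻¹ * x i.succ) 1),
    fun g x => by simp [mul_assoc], ?_⟩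
  ext g
  simp [pairing_single, Fin.partialProd_right_inv]

end Pairing

variable {k G : Type} [Field k] [Group G] {n : ℕ}

lemma exists_d_eq_of_d_eq_zero [Subsingleton (ReducedCohomology k G (n + 1))]
    {z : chains G k (n + 1)} (hz : d G k n z = 0) : ∃ y, d G k (n + 1) y = z := by
  by_contra not_boundary
  let differential : chains G k (n + 2) →ₗ[k] chains G k (n + 1) :=
    { d G k (n + 1) with map_smul' := d_smul }
  obtain ⟨φ, φ_ne, range_le⟩ :=
    Submodule.exists_le_ker_of_notMem (p := LinearMap.range differential) not_boundary
  obtain ⟨f, hf, rfl⟩ := exists_pairing_eq φ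
  have f_cocycle : f ∈ cocycles k G (n + 1) := by
    refine ⟨hf, eq_zero_of_pairing_eq_zero (coboundary_mem_invariantCochains hf) ?_⟩
    refine LinearMap.ext fun y => ?_
    rw [← pairing_d hf]
    exact range_le ⟨y, rfl⟩
  obtain ⟨u, hu, rfl⟩ :=
    (cohomologyClass_eq_zero_iff (f := ⟨f, f_cocycle⟩)).1 (Subsingleton.elim _ _)
  refine φ_ne ?_
  rw [← pairing_d hu, hz, map_zero]

lemma subsingleton_homology [Subsingleton (ReducedCohomology k G (n + 1))] :
    Subsingleton (Homology G k (n + 1)) := by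
  refine Submodule.Quotient.subsingleton_iff.2 (eq_top_iff.2 ?_)
  rintro ⟨z, hz⟩ _
  exact exists_d_eq_of_d_eq_zero hz

end Duality

section DegreeZero

variable {G G' A : Type} [Group G] [Group G'] [AddCommGroup A]

lemma d_zero_eq_zero : d G A 0 = 0 := by
  refine Finsupp.lhom_ext fun g a => ?_
  rw [d_single, Fin.sum_univ_one, Subsingleton.elim (Fin.contractNth 0 (· * ·) g) (Fin.tail g)]
  simp

lemma cyclesMap_zero_bijective (φ : G →* G') : Function.Bijective (cyclesMap A φ 0) := by
  constructor
  · intro x y h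
    exact Subtype.ext (Finsupp.mapDomain_injective (Function.injective_of_subsingleton _)
      (congrArg Subtype.val h))
  · intro y
    obtain ⟨x, hx⟩ := Finsupp.mapDomain_surjective (M := A)
      (Function.surjective_to_subsingleton fun v : Fin 0 → G => φ ∘ v) y.1
    exact ⟨⟨x, trivial⟩, Subtype.ext hx⟩

lemma inducedMap_zero_bijective (φ : G →* G') : Function.Bijective (inducedMap A φ 0) := by
  have boundaries_eq (H : Type) [Group H] : boundaries H A 0 = ⊥ := by
    rw [boundaries, d_zero_eq_zero, LinearMap.range_zero, Submodule.comap_bot,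
      Submodule.ker_subtype]
  obtain ⟨injective, surjective⟩ := cyclesMap_zero_bijective (A := A) φ
  constructor
  · rw [← LinearMap.ker_eq_bot, inducedMap, Submodule.ker_mapQ, boundaries_eq G',
      Submodule.comap_bot, LinearMap.ker_eq_bot.2 injective, Submodule.map_bot]
  · rw [← LinearMap.range_eq_top, inducedMap, Submodule.range_mapQ,
      LinearMap.range_eq_top.2 surjective, Submodule.map_top, Submodule.range_mkQ]

end DegreeZero

section GeneralLinearGroup

variable {ℓ r : ℕ} [Fact ℓ.Prime] {F : Type} [Field F] [Fintype F] {k : Type} [Field k] [CharP k ℓ]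

lemma subsingleton_cohomology_GL (hcard : Fintype.card F = ℓ ^ r) (hne : ℓ ^ r ≠ 2) {j n : ℕ}
    (hn : n + 2 < j + r * (ℓ - 1)) :
    Subsingleton (ReducedCohomology k (GL (Fin j) F) n) := by
  have one_lt_card : 1 < Fintype.card F := Fintype.one_lt_card
  have r_ne_zero : r ≠ 0 := by
    rintro rfl
    simp [hcard] at one_lt_card
  have hk : (Nat.card F : k) = 0 := by
    rw [Nat.card_eq_fintype_card, hcard, Nat.cast_pow, CharP.cast_eq_zero, zero_pow r_ne_zero]
  have : Nontrivial Fˣ := by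
    classical
    rw [← Fintype.one_lt_card_iff_nontrivial, Fintype.card_units]
    omega
  have : NeZero r := ⟨r_ne_zero⟩
  have : NeZero (ℓ - 1) := ⟨Nat.sub_ne_zero_of_lt (Fact.out : ℓ.Prime).one_lt⟩
  obtain ⟨v, hv⟩ := exists_zeroSumFree F hcard
  have := hv.subsingleton_linearEquiv_pi hk (j := j) (n := n) (by simpa using hn)
  let e : GL (Fin j) F ≃* ((Fin j → F) ≃ₗ[F] (Fin j → F)) :=
    (Matrix.GeneralLinearGroup.toLin' (Pi.basisFun F (Fin j))).trans
      (LinearMap.GeneralLinearGroup.generalLinearEquiv F (Fin j → F))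
  have e_symm_comp : e.symm.toMonoidHom.comp e.toMonoidHom = MonoidHom.id _ :=
    MonoidHom.ext e.symm_apply_apply
  exact (res_injective_of_comp_eq_id e_symm_comp).subsingleton

theorem subsingleton_homology_GL (hcard : Fintype.card F = ℓ ^ r) (hne : ℓ ^ r ≠ 2) {n d : ℕ}
    (hd : d + 3 < n + r * (ℓ - 1)) : Subsingleton (Homology (GL (Fin n) F) k (d + 1)) :=
  have := subsingleton_cohomology_GL (k := k) hcard hne hd
  subsingleton_homology

end GeneralLinearGroup

end GLStability

open GroupHomologyBar GLStability in
theorem GL_homology_stability_char_general (ℓ r : ℕ) [Fact ℓ.Prime] (F : Type) [Field F] [Fintype F]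
    (hcard : Fintype.card F = ℓ ^ r) (hne : ℓ ^ r ≠ 2) (k : Type) [Field k] [CharP k ℓ] (n : ℕ) :
    (∀ d : ℕ, d ≤ n + r * (ℓ - 1) - 3 → Function.Bijective (inducedMap k (glStab F n) d)) ∧
    Function.Surjective (inducedMap k (glStab F n) (n + r * (ℓ - 1) - 2)) := by
  constructor
  · rintro (_ | d) hd
    · exact inducedMap_zero_bijective _
    · have := subsingleton_homology_GL (k := k) (n := n) (d := d) hcard hne (by omega)
      have := subsingleton_homology_GL (k := k) (n := n + 1) (d := d) hcard hne (by omega)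
      exact ⟨Function.injective_of_subsingleton _, Function.surjective_to_subsingleton _⟩
  · rcases hd : n + r * (ℓ - 1) - 2 with _ | d
    · exact (inducedMap_zero_bijective _).surjective
    · have := subsingleton_homology_GL (k := k) (n := n + 1) (d := d) hcard hne (by omega)
      exact Function.surjective_to_subsingleton _

open GroupHomologyBar in
/-- Homological stability for general linear groups over the finite field `𝔽_{ℓ^r} ≠ 𝔽₂`,
with coefficients in `𝔽_ℓ = ZMod ℓ` (trivial action): the stabilization map
`GL_n(F) → GL_{n+1}(F)` induces an isomorphism on `H_d(-; 𝔽_ℓ)` for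
`d ≤ n + r(ℓ-1) - 3` and a surjection for `d = n + r(ℓ-1) - 2`. -/
theorem GL_homology_stability_char (ℓ r : ℕ) (hℓ : ℓ.Prime) (hr : 1 ≤ r)
    (F : Type) [Field F] [Fintype F] (hcard : Fintype.card F = ℓ ^ r)
    (hne : ℓ ^ r ≠ 2) (n : ℕ) (hn : 1 ≤ n) :
    (∀ d : ℕ, d ≤ n + r * (ℓ - 1) - 3 →
      Function.Bijective (inducedMap (ZMod ℓ) (glStab F n) d)) ∧
    Function.Surjective (inducedMap (ZMod ℓ) (glStab F n) (n + r * (ℓ - 1) - 2)) :=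
  have := Fact.mk hℓ
  GL_homology_stability_char_general ℓ r F hcard hne (ZMod ℓ) n
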